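/- arXiv:1711.02777 — 9 statements merged into one kernel-verified Lean document; each statement's English description precedes it below -/
import Mathlib

section
/- Fix an even integer q ≥ 0 and integers k, n, d with 0 ≤ q < 2k ≤ n and d ≥ 1. Assume one of the following holds: (1) n is even, 2k ≤ n−2, and d ≥ n−2; (2) n is odd, 2k ≤ n−2, and d ≥ n−3; (3) n is even, 2k = n, and q = 2k−2; (4) n is odd, 2k = n−1, q = 2k−2, and d ≥ n−3. Then R_{q,k,n,d} = dk − 1 + q(k − q/2 − 1). -/
/-- `IsPart k y`: `y` encodes a partition with at most `k` parts (1-indexed),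
with `y i = 0` for `i = 0` and for `i > k`. -/
def IsPart (k : ℕ) (y : ℕ → ℤ) : Prop :=
  (∀ i, 1 ≤ i → i < k → y (i + 1) ≤ y i) ∧
  (∀ i, 1 ≤ i → i ≤ k → 0 ≤ y i) ∧
  (∀ i, i = 0 ∨ k < i → y i = 0)

/-- `IsPartE k y`: `y` belongs to `P_e(k)`: a partition with at most `k` parts,
with `y_{2i} = y_{2i-1}` for `1 ≤ i ≤ ⌊k/2⌋`, and `y_k = 0` if `k` is odd. -/
def IsPartE (k : ℕ) (y : ℕ → ℤ) : Prop :=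
  IsPart k y ∧ (∀ i, 1 ≤ i → 2 * i ≤ k → y (2 * i) = y (2 * i - 1)) ∧ (Odd k → y k = 0)

/-- The size `|y|` of a partition with at most `k` parts. -/
def psize (k : ℕ) (y : ℕ → ℤ) : ℤ := ∑ i ∈ Finset.Icc 1 k, y i

/-- The set `𝒴𝒰(q,k,n,d)` of pairs of partitions `(y,u) ∈ P_e(n-q) × P(n-q)` with
`|y| ≤ d(2k-q)-2`, `|y| - 2y₁ ≥ d(2k-q-2)`, all `u_i` even, `u₁ = q`, and
`y_i - y_{i+1} ≥ u_i - u_{i+1}` for `1 ≤ i ≤ n-q-1`. -/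
def YU (q k n d : ℕ) : Set ((ℕ → ℤ) × (ℕ → ℤ)) :=
  { p | IsPartE (n - q) p.1 ∧ IsPart (n - q) p.2 ∧
    psize (n - q) p.1 ≤ (d : ℤ) * (2 * (k : ℤ) - (q : ℤ)) - 2 ∧
    (d : ℤ) * (2 * (k : ℤ) - (q : ℤ) - 2) ≤ psize (n - q) p.1 - 2 * p.1 1 ∧
    (∀ i, Even (p.2 i)) ∧ p.2 1 = (q : ℤ) ∧
    (∀ i, 1 ≤ i → i ≤ n - q - 1 → p.2 i - p.2 (i + 1) ≤ p.1 i - p.1 (i + 1)) }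

/-- The function `g_{q,k,n,d}` (which depends only on `q` and `n`):
`g(y,u) = |y|/2 + |u|/2 + q(y₁-1)/2 - Σ_{i=1}^{n-q-1} (u_{i+1}/2)((y_i-y_{i+1})-(u_i-u_{i+1}))`. -/
def gfun (q n : ℕ) (p : (ℕ → ℤ) × (ℕ → ℤ)) : ℚ :=
  (psize (n - q) p.1 : ℚ) / 2 + (psize (n - q) p.2 : ℚ) / 2
    + (q : ℚ) * ((p.1 1 : ℚ) - 1) / 2
    - ∑ i ∈ Finset.Icc 1 (n - q - 1),
        ((p.2 (i + 1) : ℚ) / 2) *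
          (((p.1 i : ℚ) - (p.1 (i + 1) : ℚ)) - ((p.2 i : ℚ) - (p.2 (i + 1) : ℚ)))

/-!
Put `m = n - q` and `s = k - q/2`. The slope condition forces `u_{2i} = u_{2i-1}` as well, so `y` and
`u` are doublings of sequences `Y` and `U` (for odd `m` the last entry of `u` is not doubled).
Summation by parts then gives, with `t_j = d - 1 - q + U_j - Y_j`,
`2 (max - g) = 2 (d s - 1 - |Y|) + U_{⌊m/2⌋} + ∑_j (U_j - U_{j+1}) (t_j - 2 (j + 1 - s))`,
where `max` is the claimed value of `R_{q,k,n,d}`.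

The size conditions give `|Y| ≤ d s - 1` and `Y_0 ≤ d - 1`, and the slope condition makes `0 ≤ t_j`
nondecreasing up to the last index `p` with `U_p ≠ 0`. The bound on `|Y|` also bounds
`∑_{j ≤ p} t_j` from below; combined with monotonicity and the lower bound on `d`, this shows that
the weighted sum is nonnegative, except when `p = ⌊m/2⌋`, where its last summand may be as small as
`-U_p`; the term `U_{⌊m/2⌋}` makes up for this. For equality take `Y = (d-1, …, d-1, s-1, 0, …)` and
`U = (q, …, q, 0, …)` with `s` leading entries each. This `U` violates the slope condition only if
`m = 3`, `s = 1` and `d = q`, and then `U = (q, 2, 0, …)` works.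
-/

section Sums

open Finset

theorem sum_Icc_one_eq_odd_add_even {M : Type*} [AddCommMonoid M] (f : ℕ → M) (m : ℕ) :
    ∑ i ∈ Icc 1 m, f i =
      ∑ j ∈ range ((m + 1) / 2), f (2 * j + 1) + ∑ j ∈ range (m / 2), f (2 * j + 2) := by
  induction m with
  | zero => simp
  | succ m ih =>
    rw [sum_Icc_succ_top (by omega), ih]
    obtain ⟨r, rfl | rfl⟩ := m.even_or_odd'
    · rw [show (2 * r + 1 + 1) / 2 = r + 1 by omega, show (2 * r + 1) / 2 = r by omega,
        show 2 * r / 2 = r by omega, sum_range_succ, add_right_comm]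
    · rw [show (2 * r + 1 + 1 + 1) / 2 = r + 1 by omega, show (2 * r + 1 + 1) / 2 = r + 1 by omega,
        show (2 * r + 1) / 2 = r by omega, sum_range_succ (fun j ↦ f (2 * j + 2)), add_assoc]

theorem sum_range_succ_le_of_monotoneOn {M : Type*} [AddCommMonoid M] [PartialOrder M]
    [IsOrderedAddMonoid M] {t : ℕ → M} {p j : ℕ} (ht : MonotoneOn t (Set.Iic p)) (hj : j ≤ p) :
    ∑ l ∈ range (p + 1), t l ≤ (j + 1) • t j + (p - j) • t p := by
  rw [show p + 1 = j + 1 + (p - j) by omega, sum_range_add]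
  gcongr
  · calc ∑ l ∈ range (j + 1), t l ≤ #(range (j + 1)) • t j :=
          sum_le_card_nsmul _ _ _ fun l hl ↦ by
            rw [mem_range] at hl
            exact ht (Set.mem_Iic.2 (by omega)) hj (by omega)
      _ = (j + 1) • t j := by rw [card_range]
  · calc ∑ l ∈ range (p - j), t (j + 1 + l) ≤ #(range (p - j)) • t p :=
          sum_le_card_nsmul _ _ _ fun l hl ↦ by
            rw [mem_range] at hl
            exact ht (Set.mem_Iic.2 (by omega)) Set.self_mem_Iic (by omega)
      _ = (p - j) • t p := by rw [card_range]

theorem sum_range_sub_succ_mul {R : Type*} [CommRing R] (U : ℕ → R) (s : R) (N : ℕ) :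
    ∑ j ∈ range N, (U j - U (j + 1)) * (j + 1 - s) =
      ∑ j ∈ range N, U j - s * U 0 - (N - s) * U N := by
  induction N with
  | zero => simp
  | succ N ih => rw [sum_range_succ, ih, sum_range_succ]; push_cast; ring

theorem sum_range_two_mul_sub_mul_sub {R : Type*} [CommRing R] (Y U : ℕ → R) (N : ℕ) :
    ∑ j ∈ range N, (2 * U j - U (j + 1) * ((Y j - Y (j + 1)) - (U j - U (j + 1)))) =
      ∑ j ∈ range N, (U j - U (j + 1)) * (2 * (j + 1) + Y j - U j)
        - U 0 * Y 0 + U 0 ^ 2 + U N * (2 * N + Y N - U N) := by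
  induction N with
  | zero => simp only [range_zero, sum_empty, Nat.cast_zero]; ring
  | succ N ih => rw [sum_range_succ, ih, sum_range_succ]; push_cast; ring

end Sums

section WeightedSums

open Finset

variable {p s : ℕ} {D : ℤ} {b t : ℕ → ℤ}

theorem two_mul_le_of_sum_weights_nonneg (hbp : 2 ≤ b p)
    (ht_nonneg : ∀ j ≤ p, 0 ≤ t j) (ht : MonotoneOn t (Set.Iic p)) (hD : s ≤ p → 2 * p ≤ D + 2)
    (hsum : (p + 1 - s) * D - p + ∑ j ∈ range (p + 1), b j * (j + 1 - s) ≤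
      ∑ j ∈ range (p + 1), t j)
    (htp : t p ≤ D - 1 + b p) (hhead : 0 ≤ ∑ j ∈ range p, b j * (j + 1 - s))
    {j : ℕ} (hj : j < p) : 2 * ((j : ℤ) + 1 - s) ≤ t j := by
  -- Otherwise `t l ≤ t j` for `l ≤ j` and `t l ≤ t p` for `l > j` make the sum of the `t l` too
  -- small for `hsum`.
  by_contra! hlt
  have hsj : s ≤ j := by have := ht_nonneg j hj.le; omega
  specialize hD (by omega)
  have htotal := sum_range_succ_le_of_monotoneOn ht hj.le
  obtain ⟨c, rfl⟩ := Nat.exists_eq_add_of_le hsj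
  obtain ⟨e, rfl⟩ := Nat.exists_eq_add_of_lt hj
  rw [sum_range_succ (fun j ↦ b j * _)] at hsum
  simp only [nsmul_eq_mul, show s + c + e + 1 - (s + c) = e + 1 by omega] at htotal
  push_cast at hD hsum htotal hlt
  have hlow : ((s : ℤ) + c + 1) * t (s + c) ≤ (s + c + 1) * (2 * c + 1) := by gcongr; omega
  have hhigh : ((e : ℤ) + 1) * t (s + c + e + 1) ≤ (e + 1) * (D - 1 + b (s + c + e + 1)) := by
    gcongr
  have hcap : ((c : ℤ) + 1) * (2 * (s + c + e + 1)) ≤ (c + 1) * (D + b (s + c + e + 1)) := by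
    gcongr; omega
  have hce : 0 ≤ ((c : ℤ) + 1) * e := by positivity
  linarith

theorem sum_range_mul_sub_nonneg (hb : ∀ j, 0 ≤ b j) (hbp : 2 ≤ b p)
    (ht_nonneg : ∀ j ≤ p, 0 ≤ t j) (ht : MonotoneOn t (Set.Iic p)) (hD : s ≤ p → 2 * p ≤ D + 2)
    (hsum : (p + 1 - s) * D - p + ∑ j ∈ range (p + 1), b j * (j + 1 - s) ≤
      ∑ j ∈ range (p + 1), t j)
    (htp : t p ≤ D - 1 + b p) :
    0 ≤ ∑ j ∈ range p, b j * (t j - 2 * (j + 1 - s)) := by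
  rcases le_total 0 (∑ j ∈ range p, b j * ((j : ℤ) + 1 - s)) with hhead | hhead
  · refine sum_nonneg fun j hj ↦ mul_nonneg (hb j) (sub_nonneg.2 ?_)
    exact two_mul_le_of_sum_weights_nonneg hbp ht_nonneg ht hD hsum htp hhead (mem_range.1 hj)
  · have hbt : 0 ≤ ∑ j ∈ range p, b j * t j :=
      sum_nonneg fun j hj ↦ mul_nonneg (hb j) (ht_nonneg j (mem_range.1 hj).le)
    simp only [mul_sub _ (t _), mul_left_comm _ (2 : ℤ), sum_sub_distrib, ← mul_sum]
    linarith

theorem sum_range_succ_mul_sub_nonneg_of_lt (hb : ∀ j, 0 ≤ b j) (hbp : 2 ≤ b p)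
    (ht_nonneg : ∀ j ≤ p, 0 ≤ t j) (ht : MonotoneOn t (Set.Iic p)) (hD : s ≤ p → 2 * p ≤ D)
    (hsum : (p + 1 - s) * D - p + ∑ j ∈ range (p + 1), b j * (j + 1 - s) ≤
      ∑ j ∈ range (p + 1), t j)
    (htp : t p < 2 * (p + 1 - s)) :
    0 ≤ ∑ j ∈ range (p + 1), b j * (t j - 2 * (j + 1 - s)) := by
  have htp_nonneg := ht_nonneg p le_rfl
  have hsp : s ≤ p := by omega
  have htotal := sum_range_succ_le_of_monotoneOn ht le_rfl
  have hweights : ∑ j ∈ range (p + 1), b j * ((j : ℤ) + 1 - s) ≤ t p := by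
    have hDe : ((p : ℤ) + 1 - s) * (2 * p) ≤ (p + 1 - s) * D := by
      gcongr
      · omega
      · exact hD hsp
    have hpt : (p : ℤ) * t p ≤ p * (2 * (p + 1 - s) - 1) := by gcongr; omega
    simp only [Nat.sub_self, zero_smul, add_zero, nsmul_eq_mul] at htotal
    push_cast at htotal
    linarith
  have hlast : 2 * t p ≤ ∑ j ∈ range (p + 1), b j * t j :=
    calc 2 * t p ≤ b p * t p := by gcongr
      _ ≤ ∑ j ∈ range (p + 1), b j * t j :=
        single_le_sum (f := fun j ↦ b j * t j)
          (fun j hj ↦ mul_nonneg (hb j) (ht_nonneg j (by rw [mem_range] at hj; omega)))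
          (self_mem_range_succ p)
  simp only [mul_sub _ (t _), mul_left_comm _ (2 : ℤ), sum_sub_distrib, ← mul_sum]
  linarith

end WeightedSums

section Dup

open Finset

/-- The sequence `Y 0, Y 0, Y 1, Y 1, …` placed in positions `1, …, m` and extended by `0`. Since
`y_{2i} = y_{2i-1}` for `y ∈ P_e(m)`, every such `y` has this form. -/
def dup (m : ℕ) (Y : ℕ → ℤ) (i : ℕ) : ℤ :=
  if 1 ≤ i ∧ i ≤ m then Y ((i - 1) / 2) else 0

variable {m : ℕ} {Y y : ℕ → ℤ}

theorem dup_two_mul_add_one (hY : ∀ j, m ≤ 2 * j → Y j = 0) (j : ℕ) :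
    dup m Y (2 * j + 1) = Y j := by
  unfold dup
  split_ifs
  · congr 1; omega
  · exact (hY j (by omega)).symm

theorem dup_two_mul_add_two {j : ℕ} (hj : 2 * j + 2 ≤ m) : dup m Y (2 * j + 2) = Y j := by
  rw [dup, if_pos (by omega)]
  congr 1; omega

theorem isPart_dup (hY : Antitone Y) (hY_nonneg : ∀ j, 0 ≤ Y j) : IsPart m (dup m Y) := by
  refine ⟨fun i hi him ↦ ?_, fun i hi him ↦ ?_, fun i hi ↦ if_neg (by omega)⟩
  · rw [dup, dup, if_pos (by omega), if_pos (by omega)]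
    exact hY (by omega)
  · rw [dup, if_pos ⟨hi, him⟩]
    exact hY_nonneg _

theorem psize_dup (hY : ∀ j, m ≤ 2 * j → Y j = 0) :
    psize m (dup m Y) = 2 * ∑ j ∈ range m, Y j - Y (m / 2) := by
  have heven : ∑ j ∈ range (m / 2), dup m Y (2 * j + 2) = ∑ j ∈ range (m / 2), Y j :=
    sum_congr rfl fun j hj ↦ dup_two_mul_add_two (by rw [mem_range] at hj; omega)
  have hrange : ∑ j ∈ range m, Y j = ∑ j ∈ range ((m + 1) / 2), Y j :=
    eventually_constant_sum (fun j hj ↦ hY j (by omega)) (by omega)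
  have hodd : ∑ j ∈ range ((m + 1) / 2), Y j = ∑ j ∈ range (m / 2), Y j + Y (m / 2) := by
    obtain ⟨r, rfl | rfl⟩ := m.even_or_odd'
    · rw [show (2 * r + 1) / 2 = 2 * r / 2 by omega, hY (2 * r / 2) (by omega), add_zero]
    · rw [show (2 * r + 1 + 1) / 2 = (2 * r + 1) / 2 + 1 by omega, sum_range_succ]
  simp only [psize, sum_Icc_one_eq_odd_add_even, dup_two_mul_add_one hY, heven]
  linarith

theorem IsPart.apply_succ_le (hy : IsPart m y) {i : ℕ} (hi : 1 ≤ i) : y (i + 1) ≤ y i := by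
  obtain ⟨hanti, hnonneg, hzero⟩ := hy
  rcases lt_trichotomy i m with h | rfl | h
  · exact hanti i hi h
  · rw [hzero (i + 1) (by omega)]; exact hnonneg i hi le_rfl
  · rw [hzero (i + 1) (by omega), hzero i (by omega)]

theorem IsPart.antitone_odd (hy : IsPart m y) : Antitone fun j ↦ y (2 * j + 1) :=
  antitone_nat_of_succ_le fun j ↦
    (hy.apply_succ_le (by omega)).trans (hy.apply_succ_le (i := 2 * j + 1) (by omega))

theorem IsPart.eq_dup (hy : IsPart m y)
    (hpair : ∀ j, 2 * j + 2 ≤ m → y (2 * j + 2) = y (2 * j + 1)) :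
    y = dup m fun j ↦ y (2 * j + 1) := by
  funext i
  unfold dup
  split_ifs with hi
  · obtain ⟨j, rfl | rfl⟩ : ∃ j, i = 2 * j + 1 ∨ i = 2 * j + 2 := ⟨(i - 1) / 2, by omega⟩
    · rw [show (2 * j + 1 - 1) / 2 = j by omega]
    · rw [hpair j hi.2, show (2 * j + 2 - 1) / 2 = j by omega]
  · exact hy.2.2 i (by omega)

end Dup

section ReducedPair

open Finset

/-- The pairs `(Y, U)` for which `(dup m Y, dup m U) ∈ 𝒴𝒰(q,k,n,d)`, where `m = n - q` and
`s = k - q/2`. The sums run over `range m` only for convenience: `Y j = 0` for `j ≥ ⌊m/2⌋`. -/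
structure IsReducedPair (q s m d : ℕ) (Y U : ℕ → ℤ) : Prop where
  antitone_fst : Antitone Y
  antitone_snd : Antitone U
  fst_eq_zero : ∀ j, m ≤ 2 * j + 1 → Y j = 0
  snd_eq_zero : ∀ j, m ≤ 2 * j → U j = 0
  even_snd : ∀ j, Even (U j)
  snd_zero : U 0 = q
  slope_le : ∀ j, 2 * j + 2 < m → U j - U (j + 1) ≤ Y j - Y (j + 1)
  sum_le : ∑ j ∈ range m, Y j ≤ d * s - 1
  le_sum : (d : ℤ) * (s - 1) ≤ ∑ j ∈ range m, Y j - Y 0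

variable {q k n s m d : ℕ} {Y U y u : ℕ → ℤ}

namespace IsReducedPair

variable (h : IsReducedPair q s m d Y U)
include h

theorem fst_nonneg (j : ℕ) : 0 ≤ Y j :=
  (h.fst_eq_zero (j + m) (by omega)).ge.trans (h.antitone_fst (by omega))

theorem snd_nonneg (j : ℕ) : 0 ≤ U j :=
  (h.snd_eq_zero (j + m) (by omega)).ge.trans (h.antitone_snd (by omega))

theorem fst_zero_le : Y 0 ≤ d - 1 := by
  linarith [h.sum_le, h.le_sum]

theorem fst_eq_zero_of_le_two_mul (j : ℕ) (hj : m ≤ 2 * j) : Y j = 0 :=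
  h.fst_eq_zero j (by omega)

theorem psize_dup_fst : psize m (dup m Y) = 2 * ∑ j ∈ range m, Y j := by
  rw [psize_dup h.fst_eq_zero_of_le_two_mul, h.fst_eq_zero (m / 2) (by omega), sub_zero]

theorem isPartE_dup_fst : IsPartE m (dup m Y) := by
  refine ⟨isPart_dup h.antitone_fst h.fst_nonneg, fun i hi him ↦ ?_, ?_⟩
  · obtain ⟨j, rfl⟩ := Nat.exists_eq_add_of_le' hi
    rw [show 2 * (j + 1) - 1 = 2 * j + 1 by omega, dup_two_mul_add_one h.fst_eq_zero_of_le_two_mul]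
    exact dup_two_mul_add_two him
  · rintro ⟨r, rfl⟩
    rw [dup_two_mul_add_one h.fst_eq_zero_of_le_two_mul, h.fst_eq_zero r le_rfl]

theorem dup_slope_le {i : ℕ} (hi : 1 ≤ i) (him : i < m) :
    dup m U i - dup m U (i + 1) ≤ dup m Y i - dup m Y (i + 1) := by
  obtain ⟨j, rfl | rfl⟩ : ∃ j, i = 2 * j + 1 ∨ i = 2 * j + 2 := ⟨(i - 1) / 2, by omega⟩
  · simp only [dup_two_mul_add_one h.fst_eq_zero_of_le_two_mul, dup_two_mul_add_one h.snd_eq_zero,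
      add_assoc, Nat.reduceAdd, dup_two_mul_add_two (show 2 * j + 2 ≤ m by omega), sub_self,
      le_refl]
  · rw [dup_two_mul_add_two him.le, dup_two_mul_add_two him.le,
      show 2 * j + 2 + 1 = 2 * (j + 1) + 1 by ring,
      dup_two_mul_add_one h.fst_eq_zero_of_le_two_mul, dup_two_mul_add_one h.snd_eq_zero]
    exact h.slope_le j him

end IsReducedPair

theorem IsReducedPair.dup_mem_YU (h : IsReducedPair q s (n - q) d Y U) (hk : 2 * k = q + 2 * s) :
    (dup (n - q) Y, dup (n - q) U) ∈ YU q k n d := by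
  have hk' : (2 : ℤ) * k = q + 2 * s := by exact_mod_cast hk
  have hfst_one : dup (n - q) Y 1 = Y 0 := dup_two_mul_add_one h.fst_eq_zero_of_le_two_mul 0
  have hsnd_one : dup (n - q) U 1 = U 0 := dup_two_mul_add_one h.snd_eq_zero 0
  refine ⟨h.isPartE_dup_fst, isPart_dup h.antitone_snd h.snd_nonneg, ?_, ?_, fun i ↦ ?_,
    hsnd_one.trans h.snd_zero, fun i hi him ↦ h.dup_slope_le hi (by omega)⟩
  · rw [h.psize_dup_fst, hk']
    linarith [h.sum_le]
  · rw [h.psize_dup_fst, hk']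
    simp only [hfst_one]
    linarith [h.le_sum]
  · simp only [dup]
    split_ifs
    · exact h.even_snd _
    · exact Even.zero

theorem pair_eq_of_mem_YU (h : (y, u) ∈ YU q k n d) {j : ℕ} (hj : 2 * j + 2 ≤ n - q) :
    y (2 * j + 2) = y (2 * j + 1) ∧ u (2 * j + 2) = u (2 * j + 1) := by
  obtain ⟨⟨-, hpair, -⟩, hu, -, -, -, -, hslope⟩ := h
  have hy : y (2 * j + 2) = y (2 * j + 1) := hpair (j + 1) (by omega) hj
  have hle := hslope (2 * j + 1) (by omega) (by omega)
  have hanti : u (2 * j + 2) ≤ u (2 * j + 1) := hu.apply_succ_le (by omega)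
  simp only [add_assoc, Nat.reduceAdd] at hle
  omega

theorem isReducedPair_of_mem_YU (h : (y, u) ∈ YU q k n d) (hk : 2 * k = q + 2 * s) :
    IsReducedPair q s (n - q) d (fun j ↦ y (2 * j + 1)) (fun j ↦ u (2 * j + 1)) := by
  have hk' : (2 : ℤ) * k = q + 2 * s := by exact_mod_cast hk
  have hpair {j : ℕ} (hj : 2 * j + 2 ≤ n - q) := pair_eq_of_mem_YU h hj
  obtain ⟨⟨hy, -, hodd⟩, hu, hle, hge, heven, hone, hslope⟩ := h
  dsimp only at *
  have hy_zero (j : ℕ) (hj : n - q ≤ 2 * j + 1) : y (2 * j + 1) = 0 := by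
    rcases hj.eq_or_lt with hj | hj
    · rw [← hj]; exact hodd ⟨j, hj⟩
    · exact hy.2.2 _ (.inr hj)
  have hsize : psize (n - q) y = 2 * ∑ j ∈ range (n - q), y (2 * j + 1) := by
    conv_lhs => rw [hy.eq_dup fun j hj ↦ (hpair hj).1]
    rw [psize_dup fun j hj ↦ hy_zero j (by omega), hy_zero _ (by omega), sub_zero]
  simp only [hsize, hk'] at hle hge
  refine ⟨hy.antitone_odd, hu.antitone_odd, hy_zero, fun j hj ↦ hu.2.2 _ (by omega),
    fun j ↦ heven _, hone, fun j hj ↦ ?_, by linarith, by simp only [mul_zero, zero_add]; linarith⟩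
  have := hslope (2 * j + 2) (by omega) (by omega)
  rw [(hpair (by omega)).1, (hpair (by omega)).2] at this
  exact this

theorem mem_YU_iff (hk : 2 * k = q + 2 * s) {p : (ℕ → ℤ) × (ℕ → ℤ)} :
    p ∈ YU q k n d ↔ ∃ Y U, IsReducedPair q s (n - q) d Y U ∧
      p = (dup (n - q) Y, dup (n - q) U) := by
  constructor
  · obtain ⟨y, u⟩ := p
    intro h
    exact ⟨_, _, isReducedPair_of_mem_YU h hk, Prod.ext
      (h.1.1.eq_dup fun j hj ↦ (pair_eq_of_mem_YU h hj).1)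
      (h.2.1.eq_dup fun j hj ↦ (pair_eq_of_mem_YU h hj).2)⟩
  · rintro ⟨Y, U, h, rfl⟩
    exact h.dup_mem_YU hk

/-- The quantity `d - 1 - q + U j - Y j`. For a reduced pair it is nonnegative, and nondecreasing in
`j` as long as `U j ≠ 0`. -/
def slack (q d : ℤ) (Y U : ℕ → ℤ) (j : ℕ) : ℤ := d - 1 - q + U j - Y j

/-- The amount by which `2 * g_{q,k,n,d}` falls short of its claimed maximum at the pair
`(dup m Y, dup m U)`; see `IsReducedPair.gfun_dup`. -/
def defect (q s m d : ℕ) (Y U : ℕ → ℤ) : ℤ :=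
  2 * (d * s - 1 - ∑ j ∈ range m, Y j) + U (m / 2) +
    ∑ j ∈ range m, (U j - U (j + 1)) * (slack q d Y U j - 2 * (j + 1 - s))

theorem gfun_eq_intCast_div_two (q n : ℕ) (p : (ℕ → ℤ) × (ℕ → ℤ)) :
    gfun q n p = (psize (n - q) p.1 + psize (n - q) p.2 + q * (p.1 1 - 1) -
      ∑ i ∈ Icc 1 (n - q - 1),
        p.2 (i + 1) * ((p.1 i - p.1 (i + 1)) - (p.2 i - p.2 (i + 1))) : ℤ) / 2 := by
  simp only [gfun, div_mul_eq_mul_div, ← sum_div]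
  push_cast
  ring

namespace IsReducedPair

variable (h : IsReducedPair q s m d Y U)
include h

theorem sum_mul_dup :
    ∑ i ∈ Icc 1 (m - 1), dup m U (i + 1) *
        ((dup m Y i - dup m Y (i + 1)) - (dup m U i - dup m U (i + 1))) =
      ∑ j ∈ range m, U (j + 1) * ((Y j - Y (j + 1)) - (U j - U (j + 1))) := by
  have hodd (j : ℕ) (hj : 2 * j + 2 ≤ m) : dup m U (2 * j + 1 + 1) *
      ((dup m Y (2 * j + 1) - dup m Y (2 * j + 1 + 1)) -
        (dup m U (2 * j + 1) - dup m U (2 * j + 1 + 1))) = 0 := by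
    simp only [dup_two_mul_add_one h.fst_eq_zero_of_le_two_mul, dup_two_mul_add_one h.snd_eq_zero,
      add_assoc, Nat.reduceAdd, dup_two_mul_add_two hj, sub_self, mul_zero]
  have heven (j : ℕ) (hj : 2 * j + 2 ≤ m) : dup m U (2 * j + 2 + 1) *
      ((dup m Y (2 * j + 2) - dup m Y (2 * j + 2 + 1)) -
        (dup m U (2 * j + 2) - dup m U (2 * j + 2 + 1))) =
      U (j + 1) * ((Y j - Y (j + 1)) - (U j - U (j + 1))) := by
    rw [dup_two_mul_add_two hj, dup_two_mul_add_two hj,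
      show 2 * j + 2 + 1 = 2 * (j + 1) + 1 by ring,
      dup_two_mul_add_one h.fst_eq_zero_of_le_two_mul, dup_two_mul_add_one h.snd_eq_zero]
  rw [sum_Icc_one_eq_odd_add_even,
    sum_eq_zero fun j hj ↦ hodd j (by rw [mem_range] at hj; omega), zero_add,
    sum_congr rfl fun j hj ↦ heven j (by rw [mem_range] at hj; omega)]
  exact (eventually_constant_sum
    (fun j hj ↦ by rw [h.snd_eq_zero (j + 1) (by omega), zero_mul]) (by omega)).symm

theorem sum_sub_succ_mul_slack :
    ∑ j ∈ range m, (U j - U (j + 1)) * (slack q d Y U j - 2 * (j + 1 - s)) =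
      (d - 1 - q + 2 * s) * q -
        ∑ j ∈ range m, (U j - U (j + 1)) * (2 * (j + 1) + Y j - U j) := by
  have hq : ∑ j ∈ range m, (U j - U (j + 1)) = q := by
    rw [sum_range_sub', h.snd_zero, h.snd_eq_zero m (by omega), sub_zero]
  rw [← hq, mul_sum, ← sum_sub_distrib]
  refine sum_congr rfl fun j _ ↦ ?_
  rw [slack, hq]
  ring

end IsReducedPair

theorem IsReducedPair.gfun_dup (h : IsReducedPair q s (n - q) d Y U) (hk : 2 * k = q + 2 * s) :
    gfun q n (dup (n - q) Y, dup (n - q) U) =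
      d * k - 1 + q * (k - q / 2 - 1) - (defect q s (n - q) d Y U : ℚ) / 2 := by
  have hk' : (2 : ℚ) * k = q + 2 * s := by exact_mod_cast hk
  have habel := sum_range_two_mul_sub_mul_sub Y U (n - q)
  have hfst_one : dup (n - q) Y 1 = Y 0 := dup_two_mul_add_one h.fst_eq_zero_of_le_two_mul 0
  rw [sum_sub_distrib, ← mul_sum, h.snd_zero, h.snd_eq_zero (n - q) (by omega), zero_mul,
    add_zero] at habel
  have hint : psize (n - q) (dup (n - q) Y) + psize (n - q) (dup (n - q) U) +
      q * (dup (n - q) Y 1 - 1) - ∑ i ∈ Icc 1 (n - q - 1), dup (n - q) U (i + 1) *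
        ((dup (n - q) Y i - dup (n - q) Y (i + 1)) - (dup (n - q) U i - dup (n - q) U (i + 1))) =
      d * (q + 2 * s) - 2 + q * (2 * s - 2) - defect q s (n - q) d Y U := by
    rw [h.psize_dup_fst, psize_dup h.snd_eq_zero, hfst_one, h.sum_mul_dup, defect,
      h.sum_sub_succ_mul_slack]
    linarith
  rw [gfun_eq_intCast_div_two, hint]
  push_cast
  linear_combination (-(d : ℚ) / 2 - q / 2) * hk'

namespace IsReducedPair

variable {p : ℕ} (h : IsReducedPair q s m d Y U)
include h

theorem slack_monotoneOn (hp : 2 * p < m) : MonotoneOn (slack q d Y U) (Set.Iic p) := by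
  refine monotoneOn_of_le_succ Set.ordConnected_Iic fun j _ _ hj ↦ ?_
  have := h.slope_le j (by simp only [Order.succ_eq_add_one, Set.mem_Iic] at hj; omega)
  simp only [slack, Order.succ_eq_add_one]
  omega

theorem slack_nonneg {j : ℕ} (hj : 2 * j < m) : 0 ≤ slack q d Y U j :=
  calc 0 ≤ slack q d Y U 0 := by
        have := h.fst_zero_le
        have := h.snd_zero
        unfold slack; omega
    _ ≤ slack q d Y U j :=
        h.slack_monotoneOn hj (Set.mem_Iic.2 j.zero_le) Set.self_mem_Iic j.zero_le

theorem sum_weights_le_sum_slack (hp : p < m) (hUp : U (p + 1) = 0) :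
    (p + 1 - s) * ((d : ℤ) - q) - p + ∑ j ∈ range (p + 1), (U j - U (j + 1)) * (j + 1 - s) ≤
      ∑ j ∈ range (p + 1), slack q d Y U j := by
  have hY : ∑ j ∈ range (p + 1), Y j ≤ d * s - 1 :=
    (sum_le_sum_of_subset_of_nonneg (by simpa using hp) fun j _ _ ↦ h.fst_nonneg j).trans h.sum_le
  have hslack : ∑ j ∈ range (p + 1), slack q d Y U j =
      (p + 1) * (d - 1 - q) + ∑ j ∈ range (p + 1), U j - ∑ j ∈ range (p + 1), Y j := by
    simp only [slack, sum_sub_distrib, sum_add_distrib, sum_const, card_range, nsmul_eq_mul]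
    push_cast
    ring
  rw [sum_range_sub_succ_mul, hUp, h.snd_zero, hslack]
  linarith

theorem exists_last_pos (hq : 0 < q) : ∃ p, 0 < U p ∧ U (p + 1) = 0 := by
  by_contra! hne
  have hpos (j : ℕ) : 0 < U j := by
    induction j with
    | zero => rw [h.snd_zero]; exact_mod_cast hq
    | succ j ih => exact (h.snd_nonneg _).lt_of_ne' (hne j ih)
  exact (hpos m).ne' (h.snd_eq_zero m (by omega))

theorem sum_sub_succ_mul_eq_of_succ_eq_zero (hUp : U (p + 1) = 0) (hp : p < m) (f : ℕ → ℤ) :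
    ∑ j ∈ range m, (U j - U (j + 1)) * f j = ∑ j ∈ range (p + 1), (U j - U (j + 1)) * f j := by
  have hzero (j : ℕ) (hj : p + 1 ≤ j) : U j = 0 :=
    (hUp ▸ h.antitone_snd hj).antisymm (h.snd_nonneg j)
  exact eventually_constant_sum
    (fun j hj ↦ by rw [hzero j hj, hzero (j + 1) (by omega), sub_self, zero_mul]) hp

theorem add_sum_mul_slack_nonneg (hs : 1 ≤ s) (hd : 2 * s < m → q + 2 * (m / 2) ≤ d + 2)
    (hp_pos : 0 < U p) (hUp : U (p + 1) = 0) :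
    0 ≤ U (m / 2) +
      ∑ j ∈ range (p + 1), (U j - U (j + 1)) * (slack q d Y U j - 2 * (j + 1 - s)) := by
  have hpm : 2 * p < m := by by_contra! hle; exact hp_pos.ne' (h.snd_eq_zero p hle)
  have hweight (j : ℕ) : 0 ≤ U j - U (j + 1) := sub_nonneg.2 (h.antitone_snd j.le_succ)
  have hlast : 2 ≤ U p - U (p + 1) := by
    obtain ⟨c, hc⟩ := h.even_snd p
    omega
  have hslack_nonneg (j : ℕ) (hj : j ≤ p) : 0 ≤ slack q d Y U j := h.slack_nonneg (by omega)
  have hmono := h.slack_monotoneOn hpm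
  have hsum := h.sum_weights_le_sum_slack (by omega) hUp
  have hslack_last : slack q d Y U p ≤ d - q - 1 + (U p - U (p + 1)) := by
    have := h.fst_nonneg p
    unfold slack; omega
  have hhead := sum_range_mul_sub_nonneg hweight hlast hslack_nonneg hmono
    (fun hsp ↦ by have := hd (by omega); omega) hsum hslack_last
  rcases (show p < m / 2 ∨ p = m / 2 by omega) with hp | rfl
  · rw [(hUp ▸ h.antitone_snd hp : U (m / 2) ≤ 0).antisymm (h.snd_nonneg _), zero_add]
    rcases le_or_gt (2 * ((p : ℤ) + 1 - s)) (slack q d Y U p) with hge | hlt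
    · rw [sum_range_succ]
      exact add_nonneg hhead (mul_nonneg (hweight p) (sub_nonneg.2 hge))
    · exact sum_range_succ_mul_sub_nonneg_of_lt hweight hlast hslack_nonneg hmono
        (fun hsp ↦ by have := hd (by omega); omega) hsum hlt
  · have hge : -1 ≤ slack q d Y U (m / 2) - 2 * ((m / 2 : ℕ) + 1 - s) := by
      have hY := h.fst_eq_zero (m / 2) (by omega)
      have hnonneg := hslack_nonneg (m / 2) le_rfl
      by_cases hsm : 2 * s < m
      · have := hd hsm
        unfold slack; omega
      · omega
    have := mul_le_mul_of_nonneg_left hge (hweight (m / 2))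
    rw [sum_range_succ]
    linarith

theorem defect_nonneg (hs : 1 ≤ s) (hd : 2 * s < m → q + 2 * (m / 2) ≤ d + 2) :
    0 ≤ defect q s m d Y U := by
  have hY := h.sum_le
  suffices hU : 0 ≤ U (m / 2) +
      ∑ j ∈ range m, (U j - U (j + 1)) * (slack q d Y U j - 2 * (j + 1 - s)) by
    unfold defect; linarith
  rcases q.eq_zero_or_pos with rfl | hq
  · have hU (j : ℕ) : U j = 0 :=
      ((h.antitone_snd j.zero_le).trans_eq h.snd_zero).antisymm (h.snd_nonneg j)
    simp [hU]
  · obtain ⟨p, hp_pos, hUp⟩ := h.exists_last_pos hq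
    have hpm : p < m := by
      by_contra! hle; exact hp_pos.ne' (h.snd_eq_zero p (by omega))
    rw [h.sum_sub_succ_mul_eq_of_succ_eq_zero hUp hpm]
    exact h.add_sum_mul_slack_nonneg hs hd hp_pos hUp

end IsReducedPair

/-- The sequence `x, …, x, z, 0, 0, …` with `s` entries `x`. -/
def stepSeq (s : ℕ) (x z : ℤ) (j : ℕ) : ℤ :=
  if j < s then x else if j = s then z else 0

variable {x z : ℤ} {j : ℕ}

theorem stepSeq_of_lt (hj : j < s) : stepSeq s x z j = x :=
  if_pos hj

theorem stepSeq_self : stepSeq s x z s = z := by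
  simp [stepSeq]

theorem stepSeq_of_gt (hj : s < j) : stepSeq s x z j = 0 := by
  rw [stepSeq, if_neg (by omega), if_neg (by omega)]

theorem stepSeq_antitone (hzx : z ≤ x) (hz : 0 ≤ z) : Antitone (stepSeq s x z) :=
  antitone_nat_of_succ_le fun j ↦ by
    unfold stepSeq
    split_ifs <;> omega

theorem sum_stepSeq (hm : s < m) : ∑ j ∈ range m, stepSeq s x z j = s * x + z := by
  rw [eventually_constant_sum (N := s + 1) (fun j hj ↦ stepSeq_of_gt hj) hm, sum_range_succ,
    stepSeq_self, sum_congr rfl fun j hj ↦ stepSeq_of_lt (mem_range.1 hj), sum_const, card_range,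
    nsmul_eq_mul]

theorem sum_stepSeq_sub_succ_mul (hs : 1 ≤ s) (hm : s < m) (f : ℕ → ℤ) :
    ∑ j ∈ range m, (stepSeq s x z j - stepSeq s x z (j + 1)) * f j =
      (x - z) * f (s - 1) + z * f s := by
  obtain ⟨s, rfl⟩ := Nat.exists_eq_add_of_le' hs
  have hbefore (j : ℕ) (hj : j < s) :
      (stepSeq (s + 1) x z j - stepSeq (s + 1) x z (j + 1)) * f j = 0 := by
    rw [stepSeq_of_lt (by omega), stepSeq_of_lt (by omega), sub_self, zero_mul]
  have hafter (j : ℕ) (hj : s + 2 ≤ j) :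
      (stepSeq (s + 1) x z j - stepSeq (s + 1) x z (j + 1)) * f j = 0 := by
    rw [stepSeq_of_gt (by omega), stepSeq_of_gt (by omega), sub_self, zero_mul]
  rw [eventually_constant_sum hafter hm, sum_range_succ, sum_range_succ,
    sum_eq_zero fun j hj ↦ hbefore j (mem_range.1 hj), stepSeq_of_lt s.lt_succ_self, stepSeq_self,
    stepSeq_of_gt (by omega), Nat.add_sub_cancel, zero_add, sub_zero]

theorem isReducedPair_stepSeq (hq : Even q) (hz : Even z) (hz_nonneg : 0 ≤ z) (hzq : z ≤ q)
    (hs : 1 ≤ s) (hsd : s ≤ d) (hsm : s < m) (hY : s = 1 ∨ 2 * s + 2 ≤ m)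
    (hU : z = 0 ∨ 2 * s < m) (hslope : 2 * s < m → q - z ≤ d - s)
    (hslope_next : 2 * s + 2 < m → z ≤ s - 1) :
    IsReducedPair q s m d (stepSeq s (d - 1) (s - 1)) (stepSeq s q z) := by
  have hsum : ∑ j ∈ range m, stepSeq s (d - 1) (s - 1) j = d * s - 1 := by
    rw [sum_stepSeq hsm]; ring
  constructor
  · exact stepSeq_antitone (by omega) (by omega)
  · exact stepSeq_antitone hzq hz_nonneg
  · intro j hj; unfold stepSeq; split_ifs <;> omega
  · intro j hj; unfold stepSeq; split_ifs <;> omega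
  · intro j; unfold stepSeq; split_ifs
    exacts [(Int.even_coe_nat q).2 hq, hz, Even.zero]
  · exact stepSeq_of_lt hs
  · intro j hj; unfold stepSeq; split_ifs <;> omega
  · exact hsum.le
  · rw [hsum, stepSeq_of_lt hs]; exact le_of_eq (by ring)

theorem defect_stepSeq (hs : 1 ≤ s) (hsm : s < m) :
    defect q s m d (stepSeq s (d - 1) (s - 1)) (stepSeq s q z) =
      stepSeq s q z (m / 2) + z * (d - q + z - s - 2) := by
  have hfirst : slack q d (stepSeq s (d - 1) (s - 1)) (stepSeq s q z) (s - 1) = 0 := by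
    rw [slack, stepSeq_of_lt (by omega), stepSeq_of_lt (by omega)]; ring
  have hlast : slack q d (stepSeq s (d - 1) (s - 1)) (stepSeq s q z) s = d - q + z - s := by
    rw [slack, stepSeq_self, stepSeq_self]; ring
  rw [defect, sum_stepSeq hsm, sum_stepSeq_sub_succ_mul hs hsm, hfirst, hlast]
  push_cast [hs]
  ring

theorem exists_isReducedPair_defect_eq_zero (hq : Even q) (hs : 1 ≤ s) (hd1 : 1 ≤ d)
    (hsm : 2 * s ≤ m) (hY : s = 1 ∨ 2 * s + 2 ≤ m) (hd : 2 * s < m → q + 2 * (m / 2) ≤ d + 2) :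
    ∃ Y U, IsReducedPair q s m d Y U ∧ defect q s m d Y U = 0 := by
  by_cases hqd : 2 * s < m → q + s ≤ d
  · refine ⟨_, _, isReducedPair_stepSeq hq Even.zero le_rfl (by omega) hs (by omega) (by omega) hY
      (.inl rfl) (by omega) (by omega), ?_⟩
    rw [defect_stepSeq hs (by omega), zero_mul, add_zero, stepSeq, if_neg (by omega), ite_self]
  · obtain ⟨rfl, rfl, rfl⟩ : s = 1 ∧ m = 3 ∧ d = q := by omega
    have hq2 : 2 ≤ d := by obtain ⟨c, hc⟩ := hq; omega
    refine ⟨_, _, isReducedPair_stepSeq (z := 2) hq even_two (by omega) (by omega) le_rfl hd1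
      (by omega) hY (.inr (by omega)) (by omega) (by omega), ?_⟩
    rw [defect_stepSeq le_rfl (by omega)]
    rw [stepSeq_self]; ring

end ReducedPair

/-- Proposition 5.1 (optimization): in each of the four listed cases, the maximum
`R_{q,k,n,d}` of `g_{q,k,n,d}` over `𝒴𝒰(q,k,n,d)` equals `dk - 1 + q(k - q/2 - 1)`. -/
theorem R_value (q k n d : ℕ) (hq : Even q) (hqk : q < 2 * k) (hkn : 2 * k ≤ n) (hd : 1 ≤ d)
    (hcase :
      (Even n ∧ 2 * k ≤ n - 2 ∧ n - 2 ≤ d) ∨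
      (Odd n ∧ 2 * k ≤ n - 2 ∧ n - 3 ≤ d) ∨
      (Even n ∧ 2 * k = n ∧ q = 2 * k - 2) ∨
      (Odd n ∧ 2 * k = n - 1 ∧ q = 2 * k - 2 ∧ n - 3 ≤ d)) :
    IsGreatest (gfun q n '' YU q k n d)
      ((d : ℚ) * (k : ℚ) - 1 + (q : ℚ) * ((k : ℚ) - (q : ℚ) / 2 - 1)) := by
  obtain ⟨s, hk⟩ : ∃ s, 2 * k = q + 2 * s := by
    obtain ⟨a, rfl⟩ := hq
    exact ⟨k - a, by omega⟩
  obtain ⟨hY, hbound⟩ : (s = 1 ∨ 2 * s + 2 ≤ n - q) ∧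
      (2 * s < n - q → q + 2 * ((n - q) / 2) ≤ d + 2) := by
    -- In each case `2 * k = n` or `2 * (n / 2) - 2 ≤ d`.
    rw [Nat.even_iff, Nat.odd_iff] at hcase
    rw [Nat.even_iff] at hq
    omega
  constructor
  · obtain ⟨Y, U, h, hzero⟩ :=
      exists_isReducedPair_defect_eq_zero hq (by omega) hd (by omega) hY hbound
    exact ⟨_, h.dup_mem_YU hk, by rw [h.gfun_dup hk, hzero, Int.cast_zero, zero_div, sub_zero]⟩
  · rintro _ ⟨p, hp, rfl⟩
    obtain ⟨Y, U, h, rfl⟩ := (mem_YU_iff hk).1 hp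
    have hdefect : (0 : ℚ) ≤ defect q s (n - q) d Y U := by
      exact_mod_cast h.defect_nonneg (by omega) hbound
    rw [h.gfun_dup hk]
    linarith
end

section
/- Let q be an even integer and k, n, d integers with 0 ≤ q < 2k ≤ n−2 and d ≥ n−3. Then R_{q,k,n,d} ≥ dk − 1 + q(k − q/2 − 1). (In particular YU(q,k,n,d) is nonempty.) -/
/-!
Write `q = 2s` and `K = k - s`. Take for `u` the rectangle with `2K` rows of length `q`. The
correction sum in `g` vanishes as soon as `y` is constant on those rows, and the two constraints on
`|y|` become equalities when `|y| = 2dK - 2` and `y₁ = d - 1`. The first `2K` rows of length `d - 1`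
fall short of that size by `2(K - 1)`, which two further rows of length `K - 1` make up. The descent
of `y` below the rectangle is then `d - K`, and it has to be at least `q`.
-/

theorem IsPart.add {m : ℕ} {y z : ℕ → ℤ} (hy : IsPart m y) (hz : IsPart m z) :
    IsPart m (y + z) :=
  ⟨fun i h₁ hi => add_le_add (hy.1 i h₁ hi) (hz.1 i h₁ hi),
    fun i h₁ hi => add_nonneg (hy.2.1 i h₁ hi) (hz.2.1 i h₁ hi),
    fun i hi => by rw [Pi.add_apply, hy.2.2 i hi, hz.2.2 i hi, add_zero]⟩

theorem IsPartE.add {m : ℕ} {y z : ℕ → ℤ} (hy : IsPartE m y) (hz : IsPartE m z) :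
    IsPartE m (y + z) :=
  ⟨hy.1.add hz.1,
    fun i h₁ hi => congrArg₂ (· + ·) (hy.2.1 i h₁ hi) (hz.2.1 i h₁ hi),
    fun hm => by rw [Pi.add_apply, hy.2.2 hm, hz.2.2 hm, add_zero]⟩

theorem psize_add (m : ℕ) (y z : ℕ → ℤ) : psize m (y + z) = psize m y + psize m z :=
  Finset.sum_add_distrib

/-- The rectangular partition with `a` parts equal to `c`, in the 1-indexed encoding of `IsPart`. -/
def rectPart (a : ℕ) (c : ℤ) (i : ℕ) : ℤ := if i ∈ Finset.Icc 1 a then c else 0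

section rectPart

variable {a i m : ℕ} {c : ℤ}

theorem rectPart_of_le (h₁ : 1 ≤ i) (hi : i ≤ a) : rectPart a c i = c :=
  if_pos (Finset.mem_Icc.2 ⟨h₁, hi⟩)

theorem rectPart_of_lt (hi : a < i) : rectPart a c i = 0 :=
  if_neg fun h => hi.not_ge (Finset.mem_Icc.1 h).2

theorem rectPart_zero : rectPart a c 0 = 0 :=
  if_neg fun h => Nat.not_succ_le_zero 0 (Finset.mem_Icc.1 h).1

theorem isPart_rectPart (ha : a ≤ m) (hc : 0 ≤ c) : IsPart m (rectPart a c) := by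
  refine ⟨fun i h₁ _ => ?_, fun i _ _ => ?_, ?_⟩
  · simp only [rectPart, Finset.mem_Icc]
    split_ifs <;> omega
  · exact ite_nonneg hc le_rfl
  · rintro i (rfl | hi)
    · exact rectPart_zero
    · exact rectPart_of_lt (ha.trans_lt hi)

theorem isPartE_rectPart (ha : a ≤ m) (ha_even : Even a) (hc : 0 ≤ c) :
    IsPartE m (rectPart a c) := by
  refine ⟨isPart_rectPart ha hc, fun i h₁ _ => ?_, fun hm => ?_⟩
  · obtain ⟨r, rfl⟩ := ha_even
    simp only [rectPart, Finset.mem_Icc]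
    split_ifs <;> omega
  · have ham : a ≠ m := by
      rintro rfl
      exact Nat.not_even_iff_odd.2 hm ha_even
    exact rectPart_of_lt (ha.lt_of_ne ham)

theorem psize_rectPart (ha : a ≤ m) : psize m (rectPart a c) = a * c := by
  simp only [psize, rectPart, Finset.sum_ite_mem,
    Finset.inter_eq_right.2 (Finset.Icc_subset_Icc_right ha), Finset.sum_const, Nat.card_Icc,
    Nat.add_sub_cancel, nsmul_eq_mul]

theorem even_rectPart (hc : Even c) (i : ℕ) : Even (rectPart a c i) := by
  unfold rectPart
  split_ifs
  exacts [hc, Even.zero]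

end rectPart

theorem mem_YU_rectPart {q k n d a : ℕ} {y : ℕ → ℤ} (hq : Even q) (ha₁ : 1 ≤ a)
    (ha : a ≤ n - q) (hy : IsPartE (n - q) y)
    (hsize : psize (n - q) y ≤ (d : ℤ) * (2 * k - q) - 2)
    (hsize' : (d : ℤ) * (2 * k - q - 2) ≤ psize (n - q) y - 2 * y 1)
    (hgap : a < n - q → (q : ℤ) ≤ y a - y (a + 1)) :
    (y, rectPart a q) ∈ YU q k n d := by
  refine ⟨hy, isPart_rectPart ha q.cast_nonneg, hsize, hsize',
    even_rectPart (Int.even_coe_nat q |>.2 hq), rectPart_of_le le_rfl ha₁, fun i h₁ hi => ?_⟩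
  have hi_lt : i < n - q := by omega
  have hdesc : y (i + 1) ≤ y i := hy.1.1 i h₁ hi_lt
  rcases lt_trichotomy i a with hia | rfl | hia
  · simpa only [rectPart_of_le h₁ hia.le, rectPart_of_le i.succ_pos hia, sub_self, sub_nonneg]
  · simpa only [rectPart_of_le h₁ le_rfl, rectPart_of_lt i.lt_succ_self, sub_zero]
      using hgap hi_lt
  · simpa only [rectPart_of_lt hia, rectPart_of_lt (hia.trans i.lt_succ_self), sub_self,
      sub_nonneg]

theorem gfun_rectPart {q n a : ℕ} {c : ℤ} {y : ℕ → ℤ} (ha : a ≤ n - q)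
    (hconst : ∀ i, 1 ≤ i → i < a → y (i + 1) = y i) :
    gfun q n (y, rectPart a c) =
      (psize (n - q) y : ℚ) / 2 + a * c / 2 + q * ((y 1 : ℚ) - 1) / 2 := by
  have hcorrection : ∀ i ∈ Finset.Icc 1 (n - q - 1),
      (rectPart a c (i + 1) : ℚ) / 2 *
        (((y i : ℚ) - y (i + 1)) - ((rectPart a c i : ℚ) - rectPart a c (i + 1))) = 0 := by
    intro i hi
    have h₁ : 1 ≤ i := (Finset.mem_Icc.1 hi).1
    rcases lt_or_ge i a with hia | hia
    · rw [hconst i h₁ hia, rectPart_of_le h₁ hia.le, rectPart_of_le i.succ_pos hia]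
      ring
    · rw [rectPart_of_lt (Nat.lt_succ_of_le hia), Int.cast_zero, zero_div, zero_mul]
  rw [gfun, Finset.sum_eq_zero hcorrection, psize_rectPart ha]
  push_cast
  ring

/-- The partition `y` of the extremal pair: `2K` parts equal to `d - 1` followed by two parts equal
to `K - 1`. It is written as a sum of two rectangles, so that both summands lie in `P_e`. -/
def twoStepPart (K : ℕ) (d : ℤ) : ℕ → ℤ :=
  rectPart (2 * K) (d - K) + rectPart (2 * K + 2) (K - 1)

section twoStepPart

variable {K i m : ℕ} {d : ℤ}

theorem twoStepPart_of_le (h₁ : 1 ≤ i) (hi : i ≤ 2 * K) : twoStepPart K d i = d - 1 := by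
  rw [twoStepPart, Pi.add_apply, rectPart_of_le h₁ hi, rectPart_of_le h₁ (by omega)]
  ring

theorem twoStepPart_two_mul_add_one : twoStepPart K d (2 * K + 1) = K - 1 := by
  rw [twoStepPart, Pi.add_apply, rectPart_of_lt (by omega), rectPart_of_le (by omega) (by omega),
    zero_add]

theorem isPartE_twoStepPart (hK : 1 ≤ K) (hd : K ≤ d) (hm : 2 * K + 2 ≤ m) :
    IsPartE m (twoStepPart K d) :=
  (isPartE_rectPart (by omega) (even_two_mul K) (by omega)).add
    (isPartE_rectPart hm ((even_two_mul K).add even_two) (by omega))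

theorem psize_twoStepPart (hm : 2 * K + 2 ≤ m) : psize m (twoStepPart K d) = 2 * (d * K - 1) := by
  rw [twoStepPart, psize_add, psize_rectPart (by omega), psize_rectPart hm]
  push_cast
  ring

end twoStepPart

theorem R_lower_bound_general (q k n d : ℕ) (hq : Even q) (hqk : q < 2 * k) (hkn : 2 * k + 2 ≤ n)
    (hd : 2 * k + q ≤ 2 * d) :
    ∃ p ∈ YU q k n d,
      (d : ℚ) * (k : ℚ) - 1 + (q : ℚ) * ((k : ℚ) - (q : ℚ) / 2 - 1) ≤ gfun q n p := by
  obtain ⟨s, rfl⟩ := even_iff_exists_two_mul.1 hq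
  obtain ⟨K, rfl⟩ : ∃ K, k = K + s := ⟨k - s, by omega⟩
  have hlen : 2 * K + 2 ≤ n - 2 * s := by omega
  have hfirst : twoStepPart K d 1 = d - 1 := twoStepPart_of_le le_rfl (by omega)
  have hsize : psize (n - 2 * s) (twoStepPart K d) = 2 * (d * K - 1) := psize_twoStepPart hlen
  refine ⟨(twoStepPart K d, rectPart (2 * K) (2 * s : ℕ)),
    mem_YU_rectPart hq (by omega) (by omega) ?_ ?_ ?_ fun _ => ?_, ?_⟩
  · exact isPartE_twoStepPart (by omega) (by omega) hlen
  · rw [hsize]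
    exact le_of_eq (by push_cast; ring)
  · rw [hsize, hfirst]
    exact le_of_eq (by push_cast; ring)
  · rw [twoStepPart_of_le (by omega) le_rfl, twoStepPart_two_mul_add_one]
    omega
  · rw [gfun_rectPart (by omega) fun i h₁ hi => by
      rw [twoStepPart_of_le i.succ_pos hi, twoStepPart_of_le h₁ hi.le], hsize, hfirst]
    exact le_of_eq (by push_cast; ring)

/-- Lemma 5.4 (lower bound): if `q` is even, `0 ≤ q < 2k ≤ n-2` and `d ≥ n-3`, then
`R_{q,k,n,d} ≥ dk - 1 + q(k - q/2 - 1)`; in particular `𝒴𝒰(q,k,n,d)` is nonempty. -/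
theorem R_lower_bound (q k n d : ℕ) (hq : Even q) (hqk : q < 2 * k) (hkn : 2 * k ≤ n - 2)
    (hd : n - 3 ≤ d) :
    ∃ p ∈ YU q k n d,
      (d : ℚ) * (k : ℚ) - 1 + (q : ℚ) * ((k : ℚ) - (q : ℚ) / 2 - 1) ≤ gfun q n p :=
  R_lower_bound_general q k n d hq hqk (by omega) (by obtain ⟨s, rfl⟩ := hq; omega)
end

section
/- Let k, n, d be integers with 2 < 2k ≤ n−2 and 1 ≤ d ≤ n−4. Then R_{2k−2, k, n, d} ≥ dk. -/
/-!
Put `q = 2k - 2`. The bound is witnessed by the pair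
`y = (d-1, d-1, 0, …, 0)`, `u = (q, q, 2h, …, 2h)` for a suitable `h`. Both sequences drop only
after the second part, so the sum in `g` has a single nonzero term, and
`g(y, u) = dk - 1 + h(n - 1 - d - 2h)`. It remains to find `h ≥ 1` with `2h ≤ n - 2 - d`, which
makes the last product at least `1`, and with `0 ≤ q - 2h ≤ d - 1`, which makes the drop of `u`
at most that of `y`. The value `h = max(1, k - ⌊(d+1)/2⌋)` does both.
-/

/-- The partition `(a, …, a, b, …, b)` with `m` parts, the first `r` of which are `a`, extended by
zero to all indices as `IsPart` requires. Both components of `symbolicPair` have this shape. -/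
def twoStep (r m : ℕ) (a b : ℤ) (i : ℕ) : ℤ :=
  if 1 ≤ i ∧ i ≤ m then if i ≤ r then a else b else 0

section twoStep

variable {r m i : ℕ} {a b : ℤ}

lemma twoStep_of_le (hi : 1 ≤ i) (him : i ≤ m) (hir : i ≤ r) : twoStep r m a b i = a := by
  simp [twoStep, *]

lemma twoStep_of_lt (hri : r < i) (him : i ≤ m) : twoStep r m a b i = b := by
  simp [twoStep, him, hri.not_ge, Nat.one_le_of_lt hri]

lemma twoStep_sub_twoStep_succ (hi : 1 ≤ i) (him : i < m) :
    twoStep r m a b i - twoStep r m a b (i + 1) = if i = r then a - b else 0 := by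
  unfold twoStep
  split_ifs <;> omega

lemma even_twoStep (ha : Even a) (hb : Even b) (i : ℕ) : Even (twoStep r m a b i) := by
  unfold twoStep
  split_ifs
  exacts [ha, hb, Even.zero]

lemma isPart_twoStep (hb : 0 ≤ b) (hab : b ≤ a) : IsPart m (twoStep r m a b) := by
  refine ⟨fun i _ _ ↦ ?_, fun i _ _ ↦ ?_, fun i _ ↦ ?_⟩ <;> unfold twoStep <;> split_ifs <;> omega

lemma isPartE_twoStep_zero (hr : Even r) (hrm : r ≤ m) (ha : 0 ≤ a) :
    IsPartE m (twoStep r m a 0) := by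
  obtain ⟨s, rfl⟩ := hr
  refine ⟨isPart_twoStep le_rfl ha, fun i _ _ ↦ ?_, fun hm ↦ ?_⟩
  · unfold twoStep
    split_ifs <;> omega
  · have hlt : s + s < m := by grind
    exact twoStep_of_lt hlt le_rfl

lemma psize_twoStep (hrm : r ≤ m) : psize m (twoStep r m a b) = r * a + (m - r) * b := by
  have hfirst : {i ∈ Finset.Icc 1 m | i ≤ r} = Finset.Icc 1 r := by
    ext i
    simp only [Finset.mem_filter, Finset.mem_Icc]
    omega
  have hlast : {i ∈ Finset.Icc 1 m | ¬ i ≤ r} = Finset.Icc (r + 1) m := by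
    ext i
    simp only [Finset.mem_filter, Finset.mem_Icc]
    omega
  calc psize m (twoStep r m a b)
      = ∑ i ∈ Finset.Icc 1 m, if i ≤ r then a else b :=
        Finset.sum_congr rfl fun i hi ↦ if_pos (Finset.mem_Icc.mp hi)
    _ = r * a + (m - r) * b := by
        rw [Finset.sum_ite, hfirst, hlast]
        simp [hrm]

end twoStep

section pair

variable {q k n d r : ℕ} {a b a' b' : ℤ}

lemma twoStep_mem_YU (hr : Even r) (hr₀ : 0 < r) (hrn : r ≤ n - q) (hq : Even q)
    (hb : Even b) (hb₀ : 0 ≤ b) (hbq : b ≤ q) (hgap : q - b ≤ a)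
    (hupper : r * a ≤ d * (2 * k - q) - 2) (hlower : d * (2 * k - q - 2) ≤ r * a - 2 * a) :
    (twoStep r (n - q) a 0, twoStep r (n - q) q b) ∈ YU q k n d := by
  have hsize : psize (n - q) (twoStep r (n - q) a 0) = r * a := by simp [psize_twoStep hrn]
  have hfirst (c e : ℤ) : twoStep r (n - q) c e 1 = c := twoStep_of_le le_rfl (by omega) hr₀
  refine ⟨isPartE_twoStep_zero hr hrn (by omega), isPart_twoStep hb₀ hbq, hsize.trans_le hupper,
    ?_, even_twoStep (by exact_mod_cast hq) hb, hfirst _ _, fun i hi hin ↦ ?_⟩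
  · simpa only [hsize, hfirst] using hlower
  · simp only [twoStep_sub_twoStep_succ hi (show i < n - q by omega)]
    split_ifs <;> omega

lemma gfun_twoStep (hr : 0 < r) (hrn : r < n - q) :
    gfun q n (twoStep r (n - q) a b, twoStep r (n - q) a' b') =
      (r * a + ((n - q : ℕ) - r) * b) / 2 + (r * a' + ((n - q : ℕ) - r) * b') / 2
        + q * (a - 1) / 2 - b' / 2 * ((a - b) - (a' - b')) := by
  have hdrop (c e : ℤ) {i : ℕ} (hi : i ∈ Finset.Icc 1 (n - q - 1)) :
      (twoStep r (n - q) c e i : ℚ) - twoStep r (n - q) c e (i + 1) =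
        if i = r then (c : ℚ) - e else 0 := by
    rw [Finset.mem_Icc] at hi
    exact_mod_cast twoStep_sub_twoStep_succ hi.1 (show i < n - q by omega)
  have hsum : ∑ i ∈ Finset.Icc 1 (n - q - 1), (twoStep r (n - q) a' b' (i + 1) : ℚ) / 2 *
      (((twoStep r (n - q) a b i : ℚ) - twoStep r (n - q) a b (i + 1)) -
        ((twoStep r (n - q) a' b' i : ℚ) - twoStep r (n - q) a' b' (i + 1))) =
      b' / 2 * ((a - b) - (a' - b')) := by
    have hmem : r ∈ Finset.Icc 1 (n - q - 1) := Finset.mem_Icc.mpr ⟨hr, by omega⟩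
    rw [Finset.sum_eq_single_of_mem r hmem]
    · rw [hdrop _ _ hmem, hdrop _ _ hmem, if_pos rfl, if_pos rfl,
        twoStep_of_lt r.lt_succ_self hrn]
    · intro i hi hir
      rw [hdrop _ _ hi, hdrop _ _ hi, if_neg hir, if_neg hir, sub_zero, mul_zero]
  simp only [gfun, hsum, psize_twoStep hrn.le, twoStep_of_le le_rfl (hr.trans hrn) hr]
  push_cast
  ring

end pair

/-- The pair `y = (d-1, d-1, 0, …, 0)`, `u = (q, q, 2h, …, 2h)` of partitions with at most `n - q`
parts, which witnesses the lower bound. The entry `d - 1` is an integer, so it is not truncated. -/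
def symbolicPair (q n d h : ℕ) : (ℕ → ℤ) × (ℕ → ℤ) :=
  (twoStep 2 (n - q) (d - 1) 0, twoStep 2 (n - q) q (2 * h))

section symbolicPair

variable {q k n d h : ℕ}

lemma symbolicPair_mem_YU (hqk : q + 2 = 2 * k) (hqn : q + 2 ≤ n) (hhq : 2 * h ≤ q)
    (hqd : q + 1 ≤ d + 2 * h) : symbolicPair q n d h ∈ YU q k n d := by
  have hk : 2 * (k : ℤ) = q + 2 := by exact_mod_cast hqk.symm
  refine twoStep_mem_YU even_two two_pos (by omega) ⟨k - 1, by omega⟩ (even_two_mul _)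
    (by omega) (by omega) (by omega) ?_ ?_ <;> rw [hk] <;> push_cast <;> linarith

lemma gfun_symbolicPair (hqn : q + 2 < n) :
    gfun q n (symbolicPair q n d h) = d * (q / 2 + 1) - 1 + h * (n - 1 - d - 2 * h) := by
  rw [symbolicPair, gfun_twoStep two_pos (by omega), Nat.cast_sub (by omega)]
  push_cast
  ring

lemma le_gfun_symbolicPair (hqk : q + 2 = 2 * k) (hqn : q + 2 < n) (hh : 1 ≤ h)
    (hhn : 2 * h + d + 2 ≤ n) : (d : ℚ) * k ≤ gfun q n (symbolicPair q n d h) := by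
  have hk : (q : ℚ) / 2 + 1 = k := by
    have : (q : ℚ) + 2 = 2 * k := by exact_mod_cast hqk
    linarith
  have hh' : (1 : ℚ) ≤ h := by exact_mod_cast hh
  have hfactor : (1 : ℚ) ≤ n - 1 - d - 2 * h := by
    have : 2 * (h : ℚ) + d + 2 ≤ n := by exact_mod_cast hhn
    linarith
  rw [gfun_symbolicPair hqn, hk]
  linarith [one_le_mul_of_one_le_of_one_le hh' hfactor]

end symbolicPair

/-- Lemma 5.6: if `2 < 2k ≤ n-2` and `1 ≤ d ≤ n-4`, then `R_{2k-2,k,n,d} ≥ dk`. -/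
theorem R_symbolic_lower (k n d : ℕ) (hk : 2 < 2 * k) (hkn : 2 * k ≤ n - 2)
    (hd1 : 1 ≤ d) (hd2 : d ≤ n - 4) :
    ∃ p ∈ YU (2 * k - 2) k n d, (d : ℚ) * (k : ℚ) ≤ gfun (2 * k - 2) n p := by
  obtain ⟨h, hh, hhk, hkd, hhn⟩ : ∃ h, 1 ≤ h ∧ h + 1 ≤ k ∧ 2 * k ≤ d + 2 * h + 1 ∧
      2 * h + d + 2 ≤ n := ⟨max 1 (k - (d + 1) / 2), by omega⟩
  have hqk : 2 * k - 2 + 2 = 2 * k := by omega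
  exact ⟨symbolicPair (2 * k - 2) n d h,
    symbolicPair_mem_YU hqk (by omega) (by omega) (by omega),
    le_gfun_symbolicPair hqk (by omega) hh hhn⟩
end

section
/- Let q be an even integer, k, n, d integers with 0 ≤ q < 2k ≤ n and d ≥ 1, and let p be an even integer with 0 ≤ p ≤ q. Then the map (y,u) ↦ (y, u − (p,p,...,p)) (subtracting p from every entry of u) is a bijection from the set {(y,u) ∈ YU(q,k,n,d) : u_{n−q} ≥ p} onto YU(q−p, k−p/2, n−p, d). Moreover, if u_{n−q} = p and v = u − (p,...,p), then g_{q−p,k−p/2,n−p,d}(y,v) = g_{q,k,n,d}(y,u) − (p/2)(n − p + y_{n−q} − 1). -/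
/-!
Subtracting `c` from every entry of `u` keeps all differences `u i - u (i + 1)`, so the defects
`(y i - y (i + 1)) - (u i - u (i + 1))` are unchanged and `(y, u - c)` meets the conditions on a
pair exactly when `(y, u)` does and the last, hence smallest, entry of `u` is at least `c`. In
`gfun` the weights `u (i + 1) / 2` drop by `c / 2`, and the sum of the defects telescopes.
-/

/-- The sequence `(c, …, c)` with `N` entries, indexed from `1` and zero outside `1, …, N`, so that
subtracting it preserves the zero padding required by `IsPart N`. -/
def constSeq (N : ℕ) (c : ℤ) : ℕ → ℤ := fun i => if 1 ≤ i ∧ i ≤ N then c else 0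

section constSeq

variable {N i : ℕ} {c : ℤ} {u : ℕ → ℤ}

theorem constSeq_of_mem (hi : 1 ≤ i ∧ i ≤ N) : constSeq N c i = c := if_pos hi

theorem constSeq_of_notMem (hi : ¬(1 ≤ i ∧ i ≤ N)) : constSeq N c i = 0 := if_neg hi

theorem even_constSeq (hc : Even c) : Even (constSeq N c i) := by
  unfold constSeq
  split_ifs
  exacts [hc, Even.zero]

theorem sub_constSeq_sub_succ (hi : 1 ≤ i) (hiN : i < N) :
    (u - constSeq N c) i - (u - constSeq N c) (i + 1) = u i - u (i + 1) := by
  rw [Pi.sub_apply, Pi.sub_apply, constSeq_of_mem (by omega), constSeq_of_mem (by omega),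
    sub_sub_sub_cancel_right]

theorem psize_sub_constSeq : psize N (u - constSeq N c) = psize N u - N * c := by
  have sum_constSeq : ∑ i ∈ Finset.Icc 1 N, constSeq N c i = N * c := by
    rw [Finset.sum_congr rfl fun i hi => constSeq_of_mem (Finset.mem_Icc.mp hi)]
    simp
  simp only [psize, Pi.sub_apply, Finset.sum_sub_distrib, sum_constSeq]

theorem IsPart.apply_last_le (hu : IsPart N u) (hi : 1 ≤ i) (hiN : i ≤ N) : u N ≤ u i := by
  have anti : AntitoneOn u (Set.Icc 1 N) :=
    antitoneOn_of_add_one_le Set.ordConnected_Icc fun j _ hj hj' =>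
      hu.1 j hj.1 (Nat.lt_of_succ_le hj'.2)
  exact anti ⟨hi, hiN⟩ ⟨hi.trans hiN, le_rfl⟩ hiN

theorem isPart_sub_constSeq_iff (hN : 1 ≤ N) (hc : 0 ≤ c) :
    IsPart N (u - constSeq N c) ↔ IsPart N u ∧ c ≤ u N := by
  have apply_mem : ∀ i, 1 ≤ i → i ≤ N → (u - constSeq N c) i = u i - c := fun i hi hiN => by
    rw [Pi.sub_apply, constSeq_of_mem ⟨hi, hiN⟩]
  have apply_outside : ∀ i, i = 0 ∨ N < i → (u - constSeq N c) i = u i := fun i hi => by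
    rw [Pi.sub_apply, constSeq_of_notMem (by omega), sub_zero]
  constructor
  · rintro ⟨anti, nonneg, zero⟩
    refine ⟨⟨fun i hi hiN => ?_, fun i hi hiN => ?_, fun i hi => ?_⟩, ?_⟩
    · linarith [anti i hi hiN, sub_constSeq_sub_succ (c := c) (u := u) hi hiN]
    · linarith [nonneg i hi hiN, apply_mem i hi hiN]
    · rw [← apply_outside i hi, zero i hi]
    · linarith [nonneg N hN le_rfl, apply_mem N hN le_rfl]
  · rintro ⟨hu, hcu⟩
    refine ⟨fun i hi hiN => ?_, fun i hi hiN => ?_, fun i hi => ?_⟩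
    · linarith [hu.1 i hi hiN, sub_constSeq_sub_succ (c := c) (u := u) hi hiN]
    · linarith [hu.apply_last_le hi hiN, apply_mem i hi hiN]
    · rw [apply_outside i hi, hu.2.2 i hi]

end constSeq

section YU

variable {q k n d p : ℕ} {y u : ℕ → ℤ}

theorem mem_YU_sub_constSeq_iff (hp : Even p) (hpq : p ≤ q) (hpk : p ≤ 2 * k) (hqn : q < n) :
    (y, u - constSeq (n - q) p) ∈ YU (q - p) (k - p / 2) (n - p) d ↔
      (y, u) ∈ YU q k n d ∧ (p : ℤ) ≤ u (n - q) := by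
  have length_eq : n - p - (q - p) = n - q := by omega
  have two_mul_sub_eq : 2 * ((k - p / 2 : ℕ) : ℤ) - ((q - p : ℕ) : ℤ) = 2 * (k : ℤ) - q := by
    obtain ⟨r, rfl⟩ := hp
    omega
  have even_iff : (∀ i, Even ((u - constSeq (n - q) p) i)) ↔ ∀ i, Even (u i) :=
    forall_congr' fun i => by
      have even_shift : Even (constSeq (n - q) p i) := even_constSeq ((Int.even_coe_nat p).mpr hp)
      simp only [Pi.sub_apply, Int.even_sub, even_shift, iff_true]
  have first_iff : (u - constSeq (n - q) p) 1 = ((q - p : ℕ) : ℤ) ↔ u 1 = q := by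
    rw [Pi.sub_apply, constSeq_of_mem (by omega), Nat.cast_sub hpq, sub_left_inj]
  have diff_iff :
      (∀ i, 1 ≤ i → i ≤ n - q - 1 →
        (u - constSeq (n - q) p) i - (u - constSeq (n - q) p) (i + 1) ≤ y i - y (i + 1)) ↔
      ∀ i, 1 ≤ i → i ≤ n - q - 1 → u i - u (i + 1) ≤ y i - y (i + 1) :=
    forall₃_congr fun i hi hiN => by rw [sub_constSeq_sub_succ hi (by omega)]
  simp only [YU, Set.mem_ofPred_eq, length_eq, two_mul_sub_eq, even_iff, first_iff, diff_iff,
    isPart_sub_constSeq_iff (u := u) (Nat.sub_pos_of_lt hqn) (Int.natCast_nonneg p)]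
  tauto

theorem sum_Icc_mul_sub_constSeq {N : ℕ} (hN : 1 ≤ N) (c : ℤ) (y u : ℕ → ℤ) :
    ∑ i ∈ Finset.Icc 1 (N - 1), (((u - constSeq N c) (i + 1) : ℚ) / 2) *
        (((y i : ℚ) - y (i + 1)) - (((u - constSeq N c) i : ℚ) - (u - constSeq N c) (i + 1))) =
      ∑ i ∈ Finset.Icc 1 (N - 1), ((u (i + 1) : ℚ) / 2) *
          (((y i : ℚ) - y (i + 1)) - ((u i : ℚ) - u (i + 1))) +
        (c : ℚ) / 2 * (((y N : ℚ) - u N) - ((y 1 : ℚ) - u 1)) := by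
  have telescope := Finset.sum_Ico_sub (fun i => (y i : ℚ) - u i) hN
  rw [← Finset.Icc_sub_one_right_eq_Ico_of_not_isMin (not_isMin_of_lt hN)] at telescope
  rw [← telescope, Finset.mul_sum, ← Finset.sum_add_distrib]
  refine Finset.sum_congr rfl fun i hi => ?_
  obtain ⟨hi, hiN⟩ := Finset.mem_Icc.mp hi
  simp only [Pi.sub_apply, constSeq_of_mem (N := N) (c := c) (i := i) (by omega),
    constSeq_of_mem (N := N) (c := c) (i := i + 1) (by omega)]
  push_cast
  ring

theorem gfun_sub_constSeq (hpq : p ≤ q) (hqn : q < n) (hu : u 1 = q) :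
    gfun (q - p) (n - p) (y, u - constSeq (n - q) p) =
      gfun q n (y, u) - (p : ℚ) / 2 * ((n : ℚ) - u (n - q) + y (n - q) - 1) := by
  have length_eq : n - p - (q - p) = n - q := by omega
  simp only [gfun, length_eq, psize_sub_constSeq, sum_Icc_mul_sub_constSeq (Nat.sub_pos_of_lt hqn),
    hu]
  push_cast [hpq, hqn.le]
  ring

end YU

theorem YU_bijection_general (q k n d p : ℕ) (hp : Even p) (hpq : p ≤ q) (hpk : p ≤ 2 * k)
    (hqn : q < n) :
    Set.BijOn (fun w : (ℕ → ℤ) × (ℕ → ℤ) => (w.1, w.2 - constSeq (n - q) p))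
      { w ∈ YU q k n d | (p : ℤ) ≤ w.2 (n - q) }
      (YU (q - p) (k - p / 2) (n - p) d) ∧
    ∀ w ∈ YU q k n d,
      gfun (q - p) (n - p) (w.1, w.2 - constSeq (n - q) p) =
        gfun q n w - ((p : ℚ) / 2) * ((n : ℚ) - w.2 (n - q) + w.1 (n - q) - 1) :=
  ⟨((Equiv.refl _).prodCongr (Equiv.subRight (constSeq (n - q) p))).bijOn
      fun _ => mem_YU_sub_constSeq_iff hp hpq hpk hqn,
    fun _ ⟨_, _, _, _, _, first_eq, _⟩ => gfun_sub_constSeq hpq hqn first_eq⟩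

/-- Case 3 of the proof of Proposition 5.1: for `p` even with `0 ≤ p ≤ q`, the map
`(y,u) ↦ (y, u - (p,...,p))` is a bijection from `{(y,u) ∈ 𝒴𝒰(q,k,n,d) : u_{n-q} ≥ p}`
onto `𝒴𝒰(q-p, k-p/2, n-p, d)`, and when `u_{n-q} = p` it changes `g` by
`-(p/2)(n - p + y_{n-q} - 1)`. -/
theorem YU_bijection (q k n d p : ℕ) (hq : Even q) (hp : Even p) (hpq : p ≤ q)
    (hqk : q < 2 * k) (hkn : 2 * k ≤ n) (hd : 1 ≤ d) :
    Set.BijOn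
      (fun w : (ℕ → ℤ) × (ℕ → ℤ) =>
        (w.1, fun i => w.2 i - if 1 ≤ i ∧ i ≤ n - q then (p : ℤ) else 0))
      { w ∈ YU q k n d | (p : ℤ) ≤ w.2 (n - q) }
      (YU (q - p) (k - p / 2) (n - p) d) ∧
    ∀ w ∈ YU q k n d, w.2 (n - q) = (p : ℤ) →
      gfun (q - p) (n - p)
          (w.1, fun i => w.2 i - if 1 ≤ i ∧ i ≤ n - q then (p : ℤ) else 0) =
        gfun q n w - ((p : ℚ) / 2) * ((n : ℚ) - (p : ℚ) + (w.1 (n - q) : ℚ) - 1) := by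
  obtain ⟨bij, gfun_eq⟩ := YU_bijection_general q k n d p hp hpq (by omega) (by omega)
  exact ⟨bij, fun w hw last_eq => (gfun_eq w hw).trans (by rw [last_eq, Int.cast_natCast])⟩
end

section
/- Let n ≥ 2 be even, m = n/2, and fix integers 0 ≤ l ≤ m−1 and c ≥ 0. Then the maximum, over all pairs (z,t) with z ∈ P(m) satisfying z_1 = z_2 = ... = z_{l+1} = c and t ∈ T_l(z), of the quantity Σ_{i=l+1}^{m} z_i + l(c−1) + |t| − f_l(z,t), equals (n−2l−1)·l + c·m; it is attained at z = (c,c,...,c) (m copies) and t = (l,l,...,l) (n−2l copies). (Via the identity reg(J_{z,l}) = max_{t ∈ T_l(z)} (Σ_{i=l+1}^m z_i + l(z_1−1) + |t| − f_l(z,t)), this computes max{reg(J_{z,l}) : z_1 = ... = z_{l+1} = c} = reg(J_{(c^m),l}).) -/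
/-- `z^{(2)}`: the sequence `(z₁,z₁,z₂,z₂,…)`, so `(z^{(2)})_j = z_{⌈j/2⌉}`,
regarded as a sequence of length `n` (padded with a final zero when `n` is odd,
which is automatic since `z i = 0` for `i > m`). -/
def zdub (z : ℕ → ℤ) (j : ℕ) : ℤ := z ((j + 1) / 2)

/-- The set `𝒯_l(z)` of sequences `t = (t₁,…,t_{n-2l})` with `t₁ = l`,
`t₁ ≥ t₂ ≥ ⋯ ≥ t_{n-2l} ≥ 0`, and
`z^{(2)}_{2l+i} - z^{(2)}_{2l+i+1} ≥ 2t_i - 2t_{i+1}` for `1 ≤ i ≤ n-2l-1`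
(encoded with `t i = 0` for `i = 0` and `i > n-2l`). -/
def Tset (n l : ℕ) (z : ℕ → ℤ) : Set (ℕ → ℤ) :=
  { t | t 1 = (l : ℤ) ∧
    (∀ i, 1 ≤ i → i < n - 2 * l → t (i + 1) ≤ t i) ∧
    (∀ i, 1 ≤ i → i ≤ n - 2 * l → 0 ≤ t i) ∧
    (∀ i, i = 0 ∨ n - 2 * l < i → t i = 0) ∧
    (∀ i, 1 ≤ i → i ≤ n - 2 * l - 1 →
      2 * t i - 2 * t (i + 1) ≤ zdub z (2 * l + i) - zdub z (2 * l + i + 1)) }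

/-- `|t| = t₁ + ⋯ + t_{n-2l}`. -/
def tsize (n l : ℕ) (t : ℕ → ℤ) : ℤ := ∑ i ∈ Finset.Icc 1 (n - 2 * l), t i

/-- `f_l(z,t) = Σ_{i=1}^{n-2l-1} t_{i+1}((z^{(2)}_{2l+i} - z^{(2)}_{2l+i+1}) - (2t_i - 2t_{i+1}))`. -/
def ffun (n l : ℕ) (z t : ℕ → ℤ) : ℤ :=
  ∑ i ∈ Finset.Icc 1 (n - 2 * l - 1),
    t (i + 1) * ((zdub z (2 * l + i) - zdub z (2 * l + i + 1)) - (2 * t i - 2 * t (i + 1)))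


/-!
The terms `z_{l+1}, …, z_m` are at most `c`, the terms `t_1, …, t_{n-2l}` are at most `t_1 = l`, and
`f_l(z,t)` is a sum of products of two factors that the definition of `T_l(z)` makes nonnegative.
All three estimates are equalities for constant sequences: since `n` is even, `(c^m)^{(2)}` has no
final zero, so it is constant over all its `n` entries and `f_l` vanishes.
-/

section Partition

variable {k : ℕ}

lemma IsPart.antitoneOn {y : ℕ → ℤ} (hy : IsPart k y) : AntitoneOn y (Set.Icc 1 k) :=
  antitoneOn_of_succ_le Set.ordConnected_Icc fun i _ hi hi' => hy.1 i hi.1 hi'.2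

lemma IsPart.sum_Icc_le {y : ℕ → ℤ} (hy : IsPart k y) {j : ℕ} (hj : j ≤ k) :
    ∑ i ∈ Finset.Icc (j + 1) k, y i ≤ ((k : ℤ) - j) * y (j + 1) := by
  have le_first : ∀ i ∈ Finset.Icc (j + 1) k, y i ≤ y (j + 1) := fun i hi => by
    obtain ⟨hji, hik⟩ := Finset.mem_Icc.1 hi
    exact hy.antitoneOn ⟨by omega, by omega⟩ ⟨by omega, hik⟩ hji
  calc ∑ i ∈ Finset.Icc (j + 1) k, y i
      ≤ (Finset.Icc (j + 1) k).card • y (j + 1) := Finset.sum_le_card_nsmul _ _ _ le_first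
    _ = ((k : ℤ) - j) * y (j + 1) := by
      rw [Nat.card_Icc, nsmul_eq_mul, Nat.add_sub_add_right, Nat.cast_sub hj]

/-- The rectangular sequence `(a^k) = (a, …, a)` with `k` entries, 1-indexed and extended by zero as
in `IsPart`. -/
def rectSeq (k : ℕ) (a : ℤ) : ℕ → ℤ := fun i => if 1 ≤ i ∧ i ≤ k then a else 0

lemma rectSeq_of_mem {a : ℤ} {i : ℕ} (h1 : 1 ≤ i) (hk : i ≤ k) : rectSeq k a i = a :=
  if_pos ⟨h1, hk⟩

lemma isPart_rectSeq {a : ℤ} (ha : 0 ≤ a) : IsPart k (rectSeq k a) := by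
  refine ⟨fun i h1 hk => ?_, fun i h1 hk => ?_, fun i hi => if_neg (by omega)⟩
  · rw [rectSeq_of_mem h1 hk.le, rectSeq_of_mem (by omega) hk]
  · rwa [rectSeq_of_mem h1 hk]

lemma sum_Icc_rectSeq (a : ℤ) {j : ℕ} (hj : j ≤ k) :
    ∑ i ∈ Finset.Icc (j + 1) k, rectSeq k a i = ((k : ℤ) - j) * a := by
  have eq_const : ∀ i ∈ Finset.Icc (j + 1) k, rectSeq k a i = a := fun i hi => by
    obtain ⟨hji, hik⟩ := Finset.mem_Icc.1 hi
    exact rectSeq_of_mem (by omega) hik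
  rw [Finset.sum_congr rfl eq_const, Finset.sum_const, Nat.card_Icc, nsmul_eq_mul,
    Nat.add_sub_add_right, Nat.cast_sub hj]

lemma zdub_rectSeq (a : ℤ) {j : ℕ} (h1 : 1 ≤ j) (hj : j ≤ 2 * k) : zdub (rectSeq k a) j = a :=
  rectSeq_of_mem (by omega) (by omega)

end Partition

section UpperBound

variable {n l : ℕ} {z t : ℕ → ℤ}

lemma isPart_of_mem_Tset (ht : t ∈ Tset n l z) : IsPart (n - 2 * l) t :=
  ⟨ht.2.1, ht.2.2.1, ht.2.2.2.1⟩

lemma tsize_le (hln : 2 * l ≤ n) (ht : t ∈ Tset n l z) :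
    tsize n l t ≤ ((n : ℤ) - 2 * l) * l := by
  have h := (isPart_of_mem_Tset ht).sum_Icc_le (Nat.zero_le _)
  simpa only [tsize, zero_add, ht.1, Nat.cast_sub hln, Nat.cast_mul, Nat.cast_ofNat, Nat.cast_zero,
    sub_zero] using h

lemma ffun_nonneg (ht : t ∈ Tset n l z) : 0 ≤ ffun n l z t := by
  obtain ⟨-, -, t_nonneg, -, drop_le⟩ := ht
  refine Finset.sum_nonneg fun i hi => ?_
  obtain ⟨h1, hi⟩ := Finset.mem_Icc.1 hi
  exact mul_nonneg (t_nonneg _ (by omega) (by omega)) (sub_nonneg.2 (drop_le i h1 hi))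

/-- The quantity `Σ_{i=l+1}^m z_i + l(c-1) + |t| - f_l(z,t)`, whose maximum over `t ∈ T_l(z)` is
`reg(J_{z,l})` when `z_1 = c`; the number `c` is a separate argument. -/
def regCandidate (n m l : ℕ) (c : ℤ) (z t : ℕ → ℤ) : ℤ :=
  (∑ i ∈ Finset.Icc (l + 1) m, z i) + (l : ℤ) * (c - 1) + tsize n l t - ffun n l z t

lemma regCandidate_le {m : ℕ} {c : ℤ} (hln : 2 * l ≤ n) (hlm : l ≤ m) (hz : IsPart m z)
    (hzc : z (l + 1) ≤ c) (ht : t ∈ Tset n l z) :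
    regCandidate n m l c z t ≤ ((n : ℤ) - 2 * l - 1) * l + c * m := by
  have sum_le : ∑ i ∈ Finset.Icc (l + 1) m, z i ≤ ((m : ℤ) - l) * c :=
    (hz.sum_Icc_le hlm).trans
      (mul_le_mul_of_nonneg_left hzc (sub_nonneg.2 (Nat.cast_le.2 hlm)))
  calc regCandidate n m l c z t
      ≤ ((m : ℤ) - l) * c + l * (c - 1) + ((n : ℤ) - 2 * l) * l - 0 :=
        sub_le_sub (add_le_add (add_le_add_left sum_le _) (tsize_le hln ht)) (ffun_nonneg ht)
    _ = ((n : ℤ) - 2 * l - 1) * l + c * m := by ring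

end UpperBound

section Attained

variable {n m l : ℕ} {c : ℤ}

lemma tsize_rectSeq (a : ℤ) (hln : 2 * l ≤ n) :
    tsize n l (rectSeq (n - 2 * l) a) = ((n : ℤ) - 2 * l) * a := by
  have h := sum_Icc_rectSeq a (Nat.zero_le (n - 2 * l))
  simpa only [tsize, zero_add, Nat.cast_sub hln, Nat.cast_mul, Nat.cast_ofNat, Nat.cast_zero,
    sub_zero] using h

lemma zdub_rectSeq_sub_zdub_rectSeq_succ (c : ℤ) {j : ℕ} (h1 : 1 ≤ j) (hj : j < 2 * m) :
    zdub (rectSeq m c) j - zdub (rectSeq m c) (j + 1) = 0 := by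
  rw [zdub_rectSeq c h1 hj.le, zdub_rectSeq c (by omega) hj, sub_self]

lemma rectSeq_mem_Tset (hln : 2 * l < n) (hnm : n ≤ 2 * m) :
    rectSeq (n - 2 * l) l ∈ Tset n l (rectSeq m c) := by
  obtain ⟨antitone, nonneg, eq_zero⟩ : IsPart (n - 2 * l) (rectSeq (n - 2 * l) l) :=
    isPart_rectSeq (Nat.cast_nonneg l)
  refine ⟨rectSeq_of_mem le_rfl (by omega), antitone, nonneg, eq_zero, fun i h1 hi => ?_⟩
  rw [zdub_rectSeq_sub_zdub_rectSeq_succ c (by omega) (by omega), rectSeq_of_mem h1 (by omega),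
    rectSeq_of_mem (by omega) (by omega), sub_self]

lemma ffun_rectSeq_rectSeq (a : ℤ) (hnm : n ≤ 2 * m) :
    ffun n l (rectSeq m c) (rectSeq (n - 2 * l) a) = 0 := by
  refine Finset.sum_eq_zero fun i hi => ?_
  obtain ⟨h1, hi⟩ := Finset.mem_Icc.1 hi
  rw [zdub_rectSeq_sub_zdub_rectSeq_succ c (by omega) (by omega), rectSeq_of_mem h1 (by omega),
    rectSeq_of_mem (by omega) (by omega), sub_self, sub_zero, mul_zero]

lemma regCandidate_rectSeq_rectSeq (hln : 2 * l ≤ n) (hlm : l ≤ m) (hnm : n ≤ 2 * m) :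
    regCandidate n m l c (rectSeq m c) (rectSeq (n - 2 * l) l) =
      ((n : ℤ) - 2 * l - 1) * l + c * m := by
  rw [regCandidate, sum_Icc_rectSeq c hlm, tsize_rectSeq _ hln, ffun_rectSeq_rectSeq _ hnm]
  ring

end Attained

/-- Lemma 4.1: for `n` even, `m = n/2`, `0 ≤ l ≤ m-1` and `c ≥ 0`, the maximum of
`Σ_{i=l+1}^m z_i + l(c-1) + |t| - f_l(z,t)` over all `z ∈ P(m)` with
`z₁ = ⋯ = z_{l+1} = c` and all `t ∈ 𝒯_l(z)` equals `(n-2l-1)l + cm`, and it is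
attained at `z = (c^m)` and `t = (l^{n-2l})`.  (Via `reg(J_{z,l}) =
max_{t ∈ 𝒯_l(z)} (Σ_{i=l+1}^m z_i + l(z₁-1) + |t| - f_l(z,t))`, this computes
`max{reg(J_{z,l}) : z₁ = ⋯ = z_{l+1} = c} = reg(J_{(c^m),l})`.) -/
theorem reg_J_even (n m l : ℕ) (c : ℤ) (hn : Even n) (h2 : 2 ≤ n) (hm : m = n / 2)
    (hl : l ≤ m - 1) (hc : 0 ≤ c) :
    IsGreatest
      { v : ℤ | ∃ z t : ℕ → ℤ, IsPart m z ∧ (∀ i, 1 ≤ i → i ≤ l + 1 → z i = c) ∧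
          t ∈ Tset n l z ∧
          v = (∑ i ∈ Finset.Icc (l + 1) m, z i) + (l : ℤ) * (c - 1)
                + tsize n l t - ffun n l z t }
      (((n : ℤ) - 2 * (l : ℤ) - 1) * (l : ℤ) + c * (m : ℤ)) ∧
    (fun i => if 1 ≤ i ∧ i ≤ n - 2 * l then (l : ℤ) else 0) ∈
      Tset n l (fun i => if 1 ≤ i ∧ i ≤ m then c else 0) ∧
    (∑ i ∈ Finset.Icc (l + 1) m, (if 1 ≤ i ∧ i ≤ m then c else 0)) + (l : ℤ) * (c - 1)
        + tsize n l (fun i => if 1 ≤ i ∧ i ≤ n - 2 * l then (l : ℤ) else 0)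
        - ffun n l (fun i => if 1 ≤ i ∧ i ≤ m then c else 0)
            (fun i => if 1 ≤ i ∧ i ≤ n - 2 * l then (l : ℤ) else 0)
      = ((n : ℤ) - 2 * (l : ℤ) - 1) * (l : ℤ) + c * (m : ℤ) := by
  have hnm : n = 2 * m := by
    rw [hm, Nat.two_mul_div_two_of_even hn]
  have hlm : l < m := by omega
  have hln : 2 * l < n := by omega
  have mem_Tset : rectSeq (n - 2 * l) l ∈ Tset n l (rectSeq m c) := rectSeq_mem_Tset hln hnm.le
  have value : regCandidate n m l c (rectSeq m c) (rectSeq (n - 2 * l) l) =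
      ((n : ℤ) - 2 * l - 1) * l + c * m := regCandidate_rectSeq_rectSeq hln.le hlm.le hnm.le
  refine ⟨⟨⟨rectSeq m c, rectSeq (n - 2 * l) l, isPart_rectSeq hc, ?_, mem_Tset, value.symm⟩, ?_⟩,
    mem_Tset, value⟩
  · exact fun i h1 hi => rectSeq_of_mem h1 (hi.trans hlm)
  · rintro _ ⟨z, t, hz, hzc, ht, rfl⟩
    exact regCandidate_le hln.le hlm.le hz (hzc (l + 1) (Nat.le_add_left 1 l) le_rfl).le ht
end

section
/- Let n ≥ 2, m = ⌊n/2⌋, 0 ≤ l ≤ m−1, z ∈ P(m) with z_1 = z_2 = ... = z_{l+1}, and t ∈ T_l(z). Define N = Σ_{i=1}^{n−2l−1} (2t_i − 2t_{i+1} + 1)(z^{(2)}_{2l+i} + n − 1 − 2t_i) + (2t_{n−2l} + 1)(z^{(2)}_n + n − 1 − 2t_{n−2l}). Then N/2 − C(n,2) + C(2l,2) + 2|t| = Σ_{i=l+1}^{m} z_i + l(z_1 − 1) + |t| − f_l(z,t), where C(a,2) = a(a−1)/2 denotes the binomial coefficient. -/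
open Finset

section Doubling

variable {M : Type*} [AddCommMonoid M]

lemma sum_Ico_half_eq_two_nsmul (z : ℕ → M) (a b : ℕ) :
    ∑ j ∈ Ico (2 * a) (2 * b), z (j / 2) = 2 • ∑ i ∈ Ico a b, z i := by
  obtain hba | hab := le_total b a
  · simp [hba]
  induction b, hab using Nat.le_induction with
  | base => simp
  | succ b hab ih =>
    have h_even : 2 * b / 2 = b := by lia
    have h_odd : (2 * b + 1) / 2 = b := by lia
    rw [show 2 * (b + 1) = 2 * b + 1 + 1 by ring, sum_Ico_succ_top (by lia),
      sum_Ico_succ_top (by lia), sum_Ico_succ_top hab, ih, h_even, h_odd, nsmul_add,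
      two_nsmul (z b), add_assoc]

lemma sum_Icc_ceil_half_eq_two_nsmul {z : ℕ → M} {n : ℕ} (l : ℕ)
    (hz : Odd n → z (n / 2 + 1) = 0) :
    ∑ i ∈ Icc 1 (n - 2 * l), z ((2 * l + i + 1) / 2) = 2 • ∑ i ∈ Icc (l + 1) (n / 2), z i := by
  obtain hnl | hln := lt_or_ge n (2 * l)
  · rw [Icc_eq_empty (by lia), Icc_eq_empty (by lia), sum_empty, sum_empty, nsmul_zero]
  have h_shift : ∑ i ∈ Icc 1 (n - 2 * l), z ((2 * l + i + 1) / 2)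
      = ∑ j ∈ Ico (2 * (l + 1)) (n + 2), z (j / 2) := by
    rw [← Ico_add_one_right_eq_Icc, show 2 * (l + 1) = 1 + (2 * l + 1) by ring,
      show n + 2 = n - 2 * l + 1 + (2 * l + 1) by lia, ← sum_Ico_add']
    exact sum_congr rfl fun i _ ↦ by congr 2; ring
  rw [h_shift, ← Ico_add_one_right_eq_Icc, ← sum_Ico_half_eq_two_nsmul]
  obtain hn | hn := Nat.even_or_odd n
  · rw [show n + 2 = 2 * (n / 2 + 1) by grind]
  · rw [show n + 2 = 2 * (n / 2 + 1) + 1 by grind, sum_Ico_succ_top (by lia),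
      show 2 * (n / 2 + 1) / 2 = n / 2 + 1 by lia, hz hn, add_zero]

end Doubling

lemma two_mul_cast_choose_two {R : Type*} [Ring R] (n : ℕ) :
    2 * (n.choose 2 : R) = n * (n - 1) := by
  induction n with
  | zero => simp
  | succ n ih =>
    rw [Nat.choose_succ_succ', Nat.choose_one_right]
    push_cast
    rw [mul_add, ih]
    noncomm_ring

section Telescoping

variable {R : Type*} [CommRing R]

lemma sum_Ico_add_top_add_two_mul_defect (w t : ℕ → R) {a b : ℕ} (hab : a ≤ b) :
    ∑ i ∈ Ico a b, (2 * t i - 2 * t (i + 1) + 1) * (w i - 2 * t i)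
        + (2 * t b + 1) * (w b - 2 * t b)
        + 2 * ∑ i ∈ Ico a b, t (i + 1) * ((w i - w (i + 1)) - (2 * t i - 2 * t (i + 1)))
      = 2 * t a * (w a - 2 * t a) + ∑ i ∈ Icc a b, (w i - 2 * t i) := by
  let g : ℕ → R := fun i ↦ 2 * t i * (w i - 2 * t i)
  have h_summand (i : ℕ) :
      (2 * t i - 2 * t (i + 1) + 1) * (w i - 2 * t i)
        + 2 * (t (i + 1) * ((w i - w (i + 1)) - (2 * t i - 2 * t (i + 1))))
      = (w i - 2 * t i) - (g (i + 1) - g i) := by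
    ring
  rw [add_right_comm, mul_sum, ← sum_add_distrib, sum_congr rfl fun i _ ↦ h_summand i,
    sum_sub_distrib, sum_Ico_sub g hab, ← Ico_add_one_right_eq_Icc, sum_Ico_succ_top hab]
  ring

/-- Both sides are doubled, so that no division by `2` occurs; `z ((j + 1) / 2)` is `z^{(2)}_j`,
whose padding zero for odd `n` is `hz`. -/
theorem reg_identity_general {n l : ℕ} {z t : ℕ → R} (hl : 2 * l < n)
    (hz : Odd n → z (n / 2 + 1) = 0) (hzl : z (l + 1) = z 1) (ht : t 1 = l) :
    (∑ i ∈ Icc 1 (n - 2 * l - 1),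
        (2 * t i - 2 * t (i + 1) + 1) * (z ((2 * l + i + 1) / 2) + n - 1 - 2 * t i)
      + (2 * t (n - 2 * l) + 1) * (z ((n + 1) / 2) + n - 1 - 2 * t (n - 2 * l)))
      - 2 * n.choose 2 + 2 * (2 * l).choose 2 + 4 * ∑ i ∈ Icc 1 (n - 2 * l), t i
    = 2 * (∑ i ∈ Icc (l + 1) (n / 2), z i + l * (z 1 - 1) + ∑ i ∈ Icc 1 (n - 2 * l), t i
        - ∑ i ∈ Icc 1 (n - 2 * l - 1), t (i + 1) *
          ((z ((2 * l + i + 1) / 2) - z ((2 * l + i + 1 + 1) / 2))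
            - (2 * t i - 2 * t (i + 1)))) := by
  have h_pos : 1 ≤ n - 2 * l := by lia
  have h_telescope :=
    sum_Ico_add_top_add_two_mul_defect (fun i ↦ z ((2 * l + i + 1) / 2) + n - 1) t h_pos
  have h_first : z ((2 * l + 1 + 1) / 2) = z 1 := by
    rw [show (2 * l + 1 + 1) / 2 = l + 1 by lia, hzl]
  have h_sum : ∑ i ∈ Icc 1 (n - 2 * l), (z ((2 * l + i + 1) / 2) + n - 1 - 2 * t i)
      = 2 * ∑ i ∈ Icc (l + 1) (n / 2), z i + (n - 2 * l) * (n - 1)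
        - 2 * ∑ i ∈ Icc 1 (n - 2 * l), t i := by
    simp only [sum_sub_distrib, sum_add_distrib, ← mul_sum, sum_const,
      sum_Icc_ceil_half_eq_two_nsmul l hz, Nat.card_Icc, add_tsub_cancel_right, nsmul_eq_mul]
    push_cast [hl.le]
    ring
  simp only [← add_assoc, sub_sub_sub_cancel_right, add_sub_add_right_eq_sub] at h_telescope
  rw [h_sum, h_first, ht, show 2 * l + (n - 2 * l) + 1 = n + 1 by lia] at h_telescope
  have h_choose_n := two_mul_cast_choose_two (R := R) n
  have h_choose_two_mul_l := two_mul_cast_choose_two (R := R) (2 * l)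
  push_cast at h_choose_two_mul_l
  rw [Icc_sub_one_right_eq_Ico_of_not_isMin (not_isMin_of_lt h_pos)]
  linear_combination h_telescope - h_choose_n + h_choose_two_mul_l

end Telescoping

/-- The computational identity concluding the proof of Theorem 3.4: with
`N = Σ_{i=1}^{n-2l-1} (2t_i - 2t_{i+1} + 1)(z^{(2)}_{2l+i} + n - 1 - 2t_i)
  + (2t_{n-2l} + 1)(z^{(2)}_n + n - 1 - 2t_{n-2l})`, one has
`N/2 - C(n,2) + C(2l,2) + 2|t| = Σ_{i=l+1}^m z_i + l(z₁-1) + |t| - f_l(z,t)`. -/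
theorem reg_identity (n m l : ℕ) (z t : ℕ → ℤ) (h2 : 2 ≤ n) (hm : m = n / 2)
    (hl : l ≤ m - 1) (hz : IsPart m z) (hzc : ∀ i, 1 ≤ i → i ≤ l + 1 → z i = z 1)
    (ht : t ∈ Tset n l z) :
    ((∑ i ∈ Finset.Icc 1 (n - 2 * l - 1),
        (2 * t i - 2 * t (i + 1) + 1) * (zdub z (2 * l + i) + (n : ℤ) - 1 - 2 * t i)
      + (2 * t (n - 2 * l) + 1) * (zdub z n + (n : ℤ) - 1 - 2 * t (n - 2 * l)) : ℤ) : ℚ) / 2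
      - (n.choose 2 : ℚ) + ((2 * l).choose 2 : ℚ) + 2 * (tsize n l t : ℚ)
    = (((∑ i ∈ Finset.Icc (l + 1) m, z i) + (l : ℤ) * (z 1 - 1)
        + tsize n l t - ffun n l z t : ℤ) : ℚ) := by
  subst hm
  have h_general := reg_identity_general (R := ℚ) (n := n) (l := l) (z := (z ·)) (t := (t ·))
    (by lia) (fun _ ↦ by simp [hz.2.2]) (by simp [hzc]) (by simp [ht.1])
  push_cast [tsize, ffun, zdub]
  linear_combination h_general / 2
end

section
/- Let n ≥ 2, m = ⌊n/2⌋, 0 ≤ l ≤ m−1, z ∈ P(m) with z_1 = z_2 = ... = z_{l+1}, and t ∈ T_l(z). Then the set W(z,l,t) is nonempty, the function λ ↦ |λ| is bounded above on W(z,l,t), and its maximum over W(z,l,t) equals Σ_{i=1}^{n−2l−1} (2t_i − 2t_{i+1} + 1)(z^{(2)}_{2l+i} + n − 1 − 2t_i) + (2t_{n−2l} + 1)(z^{(2)}_n + n − 1 − 2t_{n−2l}). -/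
/-- The set `W(z,l,t)` of dominant weights `λ = (λ₁ ≥ ⋯ ≥ λ_n) ∈ ℤⁿ` (1-indexed) with
`λ_{2l+i-2t_i} = z^{(2)}_{2l+i} + n - 1 - 2t_i` for `i = 1,…,n-2l`,
`λ_{2i} = λ_{2i-1}` for `0 < 2i < n - 2t_{n-2l}`, and
`λ_{n-2i} = λ_{n-2i-1}` for `0 ≤ i ≤ t_{n-2l} - 1`. -/
def Wset (n l : ℕ) (z t : ℕ → ℤ) : Set (ℕ → ℤ) :=
  { lam | (∀ i, 1 ≤ i → i < n → lam (i + 1) ≤ lam i) ∧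
    (∀ i, 1 ≤ i → i ≤ n - 2 * l →
      lam (2 * l + i - 2 * (t i).toNat) = zdub z (2 * l + i) + (n : ℤ) - 1 - 2 * t i) ∧
    (∀ i, 0 < 2 * i → 2 * i < n - 2 * (t (n - 2 * l)).toNat →
      lam (2 * i) = lam (2 * i - 1)) ∧
    (∀ i : ℕ, (i : ℤ) ≤ t (n - 2 * l) - 1 → lam (n - 2 * i) = lam (n - 2 * i - 1)) }


/-!
The prescribed positions `2l + i - 2tᵢ` increase strictly from `1`, and the convention
`t_{n-2l+1} = 0` turns the next one into `n + 1`; so they cut `1, …, n` into `n - 2l` blocks, the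
`i`-th of length `2tᵢ - 2tᵢ₊₁ + 1`. The prescribed values decrease. A weakly decreasing sequence is
bounded on each block by its value at the left end, so the sequence that is constant on blocks
dominates `W(z,l,t)` termwise, and the claimed maximum is its sum. It lies in `W(z,l,t)`: the
equalities `λ_{n-2i} = λ_{n-2i-1}` compare entries of the last block, and `λ_{2i} = λ_{2i-1}` could
only fail where a block starts at `2i`. The index of that block is then even, say `r + 1`; as `r` is
odd, `z⁽²⁾_{2l+r} = z⁽²⁾_{2l+r+1}`, which forces `t_r = t_{r+1}`, so that blocks `r` and `r + 1`
carry the same value.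
-/

section Staircase

/-- The index of the block containing `j` when the blocks are `[p i, p (i + 1))` with `i ≤ N`. The
`N`-th block is taken to be unbounded, and `j` gets the junk index `0` if it precedes all blocks. -/
def blockIndex (p : ℕ → ℕ) (N j : ℕ) : ℕ := Nat.findGreatest (fun i => p i ≤ j) N

/-- The step function with value `v i` on the `i`-th block of `blockIndex p N`. -/
def staircase {α : Type*} (p : ℕ → ℕ) (v : ℕ → α) (N j : ℕ) : α := v (blockIndex p N j)

variable {p : ℕ → ℕ} {s N i j : ℕ}

theorem blockIndex_mem_Icc (hs : s ≤ N) (hj : p s ≤ j) : blockIndex p N j ∈ Set.Icc s N :=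
  ⟨Nat.le_findGreatest hs hj, Nat.findGreatest_le N⟩

theorem apply_blockIndex_le (hs : s ≤ N) (hj : p s ≤ j) : p (blockIndex p N j) ≤ j :=
  Nat.findGreatest_spec (P := fun i => p i ≤ j) hs hj

theorem blockIndex_mono (p : ℕ → ℕ) (N : ℕ) : Monotone (blockIndex p N) :=
  fun _ _ h => Nat.findGreatest_mono_left (fun _ hi => hi.trans h) N

theorem blockIndex_eq (hp : MonotoneOn p (Set.Icc s (N + 1))) (hi : i ∈ Set.Icc s N)
    (hj : j ∈ Set.Ico (p i) (p (i + 1))) : blockIndex p N j = i := by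
  refine Nat.findGreatest_eq_iff.2 ⟨hi.2, fun _ => hj.1, fun k hik hkN => ?_⟩
  have hpk : p (i + 1) ≤ p k := hp (by grind) (by grind) hik
  exact (hj.2.trans_le hpk).not_ge

theorem blockIndex_add_one (hs : s ≤ N) (hj : p s ≤ j) (hne : ∀ i ∈ Set.Icc s N, p i ≠ j + 1) :
    blockIndex p N (j + 1) = blockIndex p N j := by
  have hj' : p s ≤ j + 1 := hj.trans j.le_succ
  have hmem := blockIndex_mem_Icc hs hj'
  have hle : p (blockIndex p N (j + 1)) ≤ j :=
    Nat.le_of_lt_succ ((apply_blockIndex_le hs hj').lt_of_ne (hne _ hmem))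
  exact (Nat.le_findGreatest hmem.2 hle).antisymm (blockIndex_mono p N j.le_succ)

theorem staircase_eq {α : Type*} {v : ℕ → α} (hp : MonotoneOn p (Set.Icc s (N + 1)))
    (hi : i ∈ Set.Icc s N) (hj : j ∈ Set.Ico (p i) (p (i + 1))) : staircase p v N j = v i :=
  congrArg v (blockIndex_eq hp hi hj)

theorem staircase_apply {α : Type*} {v : ℕ → α} (hp : StrictMonoOn p (Set.Icc s (N + 1)))
    (hi : i ∈ Set.Icc s N) : staircase p v N (p i) = v i :=
  staircase_eq hp.monotoneOn hi ⟨le_rfl, hp (by grind) (by grind) i.lt_succ_self⟩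

theorem staircase_add_one {α : Type*} {v : ℕ → α} (hs : s ≤ N) (hj : p s ≤ j)
    (hne : ∀ i ∈ Set.Icc s N, p i ≠ j + 1) : staircase p v N (j + 1) = staircase p v N j :=
  congrArg v (blockIndex_add_one hs hj hne)

theorem antitoneOn_staircase {α : Type*} [Preorder α] {v : ℕ → α} (hs : s ≤ N)
    (hv : AntitoneOn v (Set.Icc s N)) : AntitoneOn (staircase p v N) (Set.Ici (p s)) :=
  fun _ hj _ hk hjk =>
    hv (blockIndex_mem_Icc hs hj) (blockIndex_mem_Icc hs hk) (blockIndex_mono p N hjk)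

theorem le_staircase {α : Type*} [Preorder α] {v f : ℕ → α} {S : Set ℕ} (hf : AntitoneOn f S)
    (hpS : Set.MapsTo p (Set.Icc s N) S) (hfv : ∀ i ∈ Set.Icc s N, f (p i) ≤ v i) (hs : s ≤ N)
    (hjS : j ∈ S) (hj : p s ≤ j) : f j ≤ staircase p v N j :=
  have hmem := blockIndex_mem_Icc hs hj
  (hf (hpS hmem) hjS (apply_blockIndex_le hs hj)).trans (hfv _ hmem)

theorem sum_Ico_eq_sum_blocks {M : Type*} [AddCommMonoid M] {a b : ℕ} (f : ℕ → M) (hab : a ≤ b)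
    (hp : MonotoneOn p (Set.Icc a b)) :
    ∑ j ∈ Finset.Ico (p a) (p b), f j =
      ∑ i ∈ Finset.Ico a b, ∑ j ∈ Finset.Ico (p i) (p (i + 1)), f j := by
  induction b, hab using Nat.le_induction with
  | base => simp
  | succ b hab ih =>
    have hpab : p a ≤ p b := hp (by grind) (by grind) hab
    have hpb : p b ≤ p (b + 1) := hp (by grind) (by grind) b.le_succ
    rw [Finset.sum_Ico_succ_top hab, ← ih (hp.mono (Set.Icc_subset_Icc_right b.le_succ)),
      Finset.sum_Ico_consecutive f hpab hpb]

theorem sum_staircase {M : Type*} [AddCommMonoid M] {v : ℕ → M} (hs : s ≤ N + 1)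
    (hp : MonotoneOn p (Set.Icc s (N + 1))) :
    ∑ j ∈ Finset.Ico (p s) (p (N + 1)), staircase p v N j =
      ∑ i ∈ Finset.Ico s (N + 1), (p (i + 1) - p i) • v i := by
  rw [sum_Ico_eq_sum_blocks _ hs hp]
  refine Finset.sum_congr rfl fun i hi => ?_
  have hconst : ∀ j ∈ Finset.Ico (p i) (p (i + 1)), staircase p v N j = v i :=
    fun j hj => staircase_eq hp (by grind) (Finset.mem_Ico.1 hj)
  rw [Finset.sum_congr rfl hconst, Finset.sum_const, Nat.card_Ico]

end Staircase

/-- The position `2l + i - 2tᵢ` of the `i`-th entry prescribed in `W(z,l,t)`. The subtraction is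
truncated, which is harmless for `t ∈ 𝒯_l(z)` and `1 ≤ i`, where `tᵢ ≤ l`. -/
def fixedPos (l : ℕ) (t : ℕ → ℤ) (i : ℕ) : ℕ := 2 * l + i - 2 * (t i).toNat

/-- The value `z⁽²⁾_{2l+i} + n - 1 - 2tᵢ` of the `i`-th entry prescribed in `W(z,l,t)`. -/
def fixedVal (n l : ℕ) (z t : ℕ → ℤ) (i : ℕ) : ℤ := zdub z (2 * l + i) + (n : ℤ) - 1 - 2 * t i

/-- The termwise largest element of `W(z,l,t)`. -/
def maxWeight (n l : ℕ) (z t : ℕ → ℤ) : ℕ → ℤ :=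
  staircase (fixedPos l t) (fixedVal n l z t) (n - 2 * l)

section Tset

variable {n l i : ℕ} {z t : ℕ → ℤ}

theorem zdub_add_one_of_odd (z : ℕ → ℤ) (hi : Odd i) : zdub z (i + 1) = zdub z i := by
  obtain ⟨k, rfl⟩ := hi
  exact congrArg z (by omega)

theorem Tset.nonneg (ht : t ∈ Tset n l z) (i : ℕ) : 0 ≤ t i := by
  obtain ⟨-, -, hnonneg, hzero, -⟩ := ht
  by_cases hi : 1 ≤ i ∧ i ≤ n - 2 * l
  · exact hnonneg i hi.1 hi.2
  · exact (hzero i (by omega)).ge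

theorem Tset.antitoneOn (ht : t ∈ Tset n l z) : AntitoneOn t (Set.Ici 1) := by
  refine antitoneOn_nat_Ici_of_succ_le fun i hi => ?_
  rcases lt_or_ge i (n - 2 * l) with hlt | hge
  · exact ht.2.1 i hi hlt
  · exact (ht.2.2.2.1 (i + 1) (by omega)).trans_le (Tset.nonneg ht i)

theorem Tset.add_one_eq_of_odd (ht : t ∈ Tset n l z) (hi : Odd i) (hiN : i < n - 2 * l) :
    t (i + 1) = t i := by
  have hanti : t (i + 1) ≤ t i := ht.2.1 i hi.pos hiN
  have hgap := ht.2.2.2.2 i hi.pos (by omega)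
  have hz : zdub z (2 * l + i + 1) = zdub z (2 * l + i) :=
    zdub_add_one_of_odd z (by grind)
  omega

theorem fixedPos_cast (ht : t ∈ Tset n l z) (hi : 1 ≤ i) :
    (fixedPos l t i : ℤ) = 2 * l + i - 2 * t i := by
  have hnonneg := Tset.nonneg ht i
  have hle : t i ≤ l := (Tset.antitoneOn ht Set.self_mem_Ici hi hi).trans_eq ht.1
  unfold fixedPos
  omega

theorem fixedPos_one (ht : t ∈ Tset n l z) : fixedPos l t 1 = 1 := by
  have h1 := ht.1
  unfold fixedPos
  omega

theorem fixedPos_last_add_one (hl : 2 * l ≤ n) (ht : t ∈ Tset n l z) :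
    fixedPos l t (n - 2 * l + 1) = n + 1 := by
  have hzero : t (n - 2 * l + 1) = 0 := ht.2.2.2.1 _ (.inr (Nat.lt_succ_self _))
  unfold fixedPos
  omega

theorem fixedPos_add_one (ht : t ∈ Tset n l z) (hi : 1 ≤ i) :
    (fixedPos l t (i + 1) : ℤ) = fixedPos l t i + (2 * t i - 2 * t (i + 1) + 1) := by
  rw [fixedPos_cast ht hi, fixedPos_cast ht (by omega)]
  push_cast
  ring

theorem strictMonoOn_fixedPos (ht : t ∈ Tset n l z) : StrictMonoOn (fixedPos l t) (Set.Ici 1) := by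
  refine strictMonoOn_of_lt_add_one Set.ordConnected_Ici fun i _ hi hi' => ?_
  have hstep := fixedPos_add_one ht hi
  have hanti : t (i + 1) ≤ t i := Tset.antitoneOn ht hi hi' i.le_succ
  omega

theorem fixedPos_mem_Icc (hl : 2 * l ≤ n) (ht : t ∈ Tset n l z) (hi : i ∈ Set.Icc 1 (n - 2 * l)) :
    fixedPos l t i ∈ Set.Icc 1 n := by
  have hmono := strictMonoOn_fixedPos ht
  have hfirst : fixedPos l t 1 ≤ fixedPos l t i :=
    hmono.monotoneOn Set.self_mem_Ici hi.1 hi.1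
  have hlast : fixedPos l t i < fixedPos l t (n - 2 * l + 1) :=
    hmono hi.1 (Nat.le_add_left 1 _) (Nat.lt_succ_of_le hi.2)
  rw [fixedPos_one ht] at hfirst
  rw [fixedPos_last_add_one hl ht] at hlast
  exact ⟨hfirst, Nat.le_of_lt_succ hlast⟩

theorem antitoneOn_fixedVal (ht : t ∈ Tset n l z) :
    AntitoneOn (fixedVal n l z t) (Set.Icc 1 (n - 2 * l)) := by
  refine antitoneOn_of_add_one_le Set.ordConnected_Icc fun i _ hi hi' => ?_
  have hgap := ht.2.2.2.2 i hi.1 (Nat.le_sub_one_of_lt hi'.2)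
  unfold fixedVal
  rw [← add_assoc]
  omega

theorem fixedVal_add_one_of_odd (ht : t ∈ Tset n l z) (hi : Odd i) (hiN : i < n - 2 * l) :
    fixedVal n l z t (i + 1) = fixedVal n l z t i := by
  unfold fixedVal
  rw [← add_assoc, zdub_add_one_of_odd z (by grind), Tset.add_one_eq_of_odd ht hi hiN]

end Tset

section maxWeight

variable {n l : ℕ} {z t : ℕ → ℤ}

theorem maxWeight_fixedPos (ht : t ∈ Tset n l z) {i : ℕ} (hi : i ∈ Set.Icc 1 (n - 2 * l)) :
    maxWeight n l z t (fixedPos l t i) = fixedVal n l z t i :=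
  staircase_apply ((strictMonoOn_fixedPos ht).mono Set.Icc_subset_Ici_self) hi

theorem maxWeight_add_one (hl : 2 * l < n) (ht : t ∈ Tset n l z) {j : ℕ} (hj : 1 ≤ j)
    (hne : ∀ i ∈ Set.Icc 1 (n - 2 * l), fixedPos l t i ≠ j + 1) :
    maxWeight n l z t (j + 1) = maxWeight n l z t j :=
  staircase_add_one (by omega) ((fixedPos_one ht).trans_le hj) hne

theorem antitoneOn_maxWeight (hl : 2 * l < n) (ht : t ∈ Tset n l z) :
    AntitoneOn (maxWeight n l z t) (Set.Ici 1) := by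
  have hanti := antitoneOn_staircase (p := fixedPos l t) (by omega) (antitoneOn_fixedVal ht)
  rwa [fixedPos_one ht] at hanti

theorem maxWeight_add_one_of_odd (hl : 2 * l < n) (ht : t ∈ Tset n l z) {j : ℕ} (hj : Odd j) :
    maxWeight n l z t (j + 1) = maxWeight n l z t j := by
  by_cases hne : ∀ i ∈ Set.Icc 1 (n - 2 * l), fixedPos l t i ≠ j + 1
  · exact maxWeight_add_one hl ht hj.pos hne
  push Not at hne
  obtain ⟨i, hi, hpos⟩ := hne
  have hcast := fixedPos_cast ht hi.1
  obtain ⟨r, rfl⟩ : ∃ r, i = r + 1 := ⟨i - 1, by grind⟩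
  have hr : Odd r := by grind
  have hrN : r < n - 2 * l := hi.2
  have hposr : fixedPos l t r = j := by
    have hstep := fixedPos_add_one ht hr.pos
    have hteq := Tset.add_one_eq_of_odd ht hr hrN
    omega
  rw [← hpos, ← hposr, maxWeight_fixedPos ht hi, maxWeight_fixedPos ht ⟨hr.pos, hrN.le⟩,
    fixedVal_add_one_of_odd ht hr hrN]

theorem maxWeight_add_one_of_last_block (hl : 2 * l < n) (ht : t ∈ Tset n l z) {j : ℕ}
    (hj : fixedPos l t (n - 2 * l) ≤ j) : maxWeight n l z t (j + 1) = maxWeight n l z t j := by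
  have hlast : n - 2 * l ∈ Set.Icc 1 (n - 2 * l) := ⟨by omega, le_rfl⟩
  refine maxWeight_add_one hl ht ((fixedPos_mem_Icc hl.le ht hlast).1.trans hj) fun i hi => ?_
  have hle : fixedPos l t i ≤ fixedPos l t (n - 2 * l) :=
    (strictMonoOn_fixedPos ht).monotoneOn hi.1 hlast.1 hi.2
  omega

theorem maxWeight_mem_Wset (hl : 2 * l < n) (ht : t ∈ Tset n l z) :
    maxWeight n l z t ∈ Wset n l z t := by
  refine ⟨fun i hi _ => antitoneOn_maxWeight hl ht hi (Nat.le_add_left 1 i) i.le_succ,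
    fun i hi hiN => maxWeight_fixedPos ht ⟨hi, hiN⟩, fun i hi _ => ?_, fun i hi => ?_⟩
  · obtain ⟨j, rfl⟩ : ∃ j, i = j + 1 := ⟨i - 1, by omega⟩
    exact maxWeight_add_one_of_odd hl ht ⟨j, rfl⟩
  · have hlast := fixedPos_cast ht (i := n - 2 * l) (by omega)
    have hpos := (fixedPos_mem_Icc hl.le ht (i := n - 2 * l) ⟨by omega, le_rfl⟩).1
    obtain ⟨j, hj⟩ : ∃ j, n - 2 * i = j + 1 := ⟨n - 2 * i - 1, by omega⟩
    rw [hj]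
    exact maxWeight_add_one_of_last_block hl ht (by omega)

theorem le_maxWeight (hl : 2 * l < n) (ht : t ∈ Tset n l z) {lam : ℕ → ℤ}
    (hlam : lam ∈ Wset n l z t) {j : ℕ} (hj : j ∈ Set.Icc 1 n) : lam j ≤ maxWeight n l z t j := by
  have hanti : AntitoneOn lam (Set.Icc 1 n) :=
    antitoneOn_of_add_one_le Set.ordConnected_Icc fun i _ hi hi' => hlam.1 i hi.1 hi'.2
  exact le_staircase hanti (fun i hi => fixedPos_mem_Icc hl.le ht hi)
    (fun i hi => (hlam.2.1 i hi.1 hi.2).le) (by omega) hj ((fixedPos_one ht).trans_le hj.1)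

theorem sum_maxWeight_eq_sum_blocks (hl : 2 * l ≤ n) (ht : t ∈ Tset n l z) :
    ∑ j ∈ Finset.Icc 1 n, maxWeight n l z t j =
      ∑ i ∈ Finset.Icc 1 (n - 2 * l), (2 * t i - 2 * t (i + 1) + 1) * fixedVal n l z t i := by
  have hmono : MonotoneOn (fixedPos l t) (Set.Icc 1 (n - 2 * l + 1)) :=
    (strictMonoOn_fixedPos ht).monotoneOn.mono Set.Icc_subset_Ici_self
  have hsum := sum_staircase (v := fixedVal n l z t) (by omega) hmono
  rw [fixedPos_one ht, fixedPos_last_add_one hl ht, Finset.Ico_add_one_right_eq_Icc,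
    Finset.Ico_add_one_right_eq_Icc] at hsum
  refine hsum.trans (Finset.sum_congr rfl fun i hi => ?_)
  have hi1 : 1 ≤ i := (Finset.mem_Icc.1 hi).1
  have hle : fixedPos l t i ≤ fixedPos l t (i + 1) :=
    (strictMonoOn_fixedPos ht).monotoneOn hi1 (Nat.le_add_left 1 i) i.le_succ
  rw [nsmul_eq_mul, Nat.cast_sub hle, fixedPos_add_one ht hi1, add_sub_cancel_left]

theorem sum_maxWeight (hl : 2 * l < n) (ht : t ∈ Tset n l z) :
    ∑ j ∈ Finset.Icc 1 n, maxWeight n l z t j =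
      ∑ i ∈ Finset.Icc 1 (n - 2 * l - 1),
          (2 * t i - 2 * t (i + 1) + 1) * (zdub z (2 * l + i) + (n : ℤ) - 1 - 2 * t i)
        + (2 * t (n - 2 * l) + 1) * (zdub z n + (n : ℤ) - 1 - 2 * t (n - 2 * l)) := by
  have hzero : t (n - 2 * l + 1) = 0 := ht.2.2.2.1 _ (.inr (Nat.lt_succ_self _))
  have hlast : 2 * l + (n - 2 * l) = n := Nat.add_sub_of_le hl.le
  rw [sum_maxWeight_eq_sum_blocks hl.le ht, ← Finset.Ico_add_one_right_eq_Icc,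
    Finset.sum_Ico_succ_top (by omega),
    Finset.Icc_sub_one_right_eq_Ico_of_not_isMin (not_isMin_of_lt (Nat.sub_pos_of_lt hl))]
  simp only [fixedVal, hlast, hzero, mul_zero, sub_zero]

end maxWeight

theorem Wset_max_general {n l : ℕ} {z t : ℕ → ℤ} (hl : 2 * l < n) (ht : t ∈ Tset n l z) :
    IsGreatest ((fun lam => ∑ i ∈ Finset.Icc 1 n, lam i) '' Wset n l z t)
      (∑ i ∈ Finset.Icc 1 (n - 2 * l - 1),
          (2 * t i - 2 * t (i + 1) + 1) * (zdub z (2 * l + i) + (n : ℤ) - 1 - 2 * t i)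
        + (2 * t (n - 2 * l) + 1) * (zdub z n + (n : ℤ) - 1 - 2 * t (n - 2 * l))) := by
  refine ⟨⟨maxWeight n l z t, maxWeight_mem_Wset hl ht, sum_maxWeight hl ht⟩, ?_⟩
  rintro _ ⟨lam, hlam, rfl⟩
  rw [← sum_maxWeight hl ht]
  exact Finset.sum_le_sum fun j hj => le_maxWeight hl ht hlam (Finset.mem_Icc.1 hj)

/-- In the proof of Theorem 3.6: for `t ∈ 𝒯_l(z)`, the set `W(z,l,t)` is nonempty,
`λ ↦ |λ|` is bounded above on it, and its maximum equals
`Σ_{i=1}^{n-2l-1} (2t_i - 2t_{i+1} + 1)(z^{(2)}_{2l+i} + n - 1 - 2t_i)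
  + (2t_{n-2l} + 1)(z^{(2)}_n + n - 1 - 2t_{n-2l})`. -/
theorem Wset_max (n m l : ℕ) (z t : ℕ → ℤ) (h2 : 2 ≤ n) (hm : m = n / 2)
    (hl : l ≤ m - 1) (hz : IsPart m z) (hzc : ∀ i, 1 ≤ i → i ≤ l + 1 → z i = z 1)
    (ht : t ∈ Tset n l z) :
    IsGreatest ((fun lam => ∑ i ∈ Finset.Icc 1 n, lam i) '' Wset n l z t)
      (∑ i ∈ Finset.Icc 1 (n - 2 * l - 1),
          (2 * t i - 2 * t (i + 1) + 1) * (zdub z (2 * l + i) + (n : ℤ) - 1 - 2 * t i)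
        + (2 * t (n - 2 * l) + 1) * (zdub z n + (n : ℤ) - 1 - 2 * t (n - 2 * l))) :=
  Wset_max_general (by omega) ht
end

section
/- Let n ≥ 2, m = ⌊n/2⌋, and fix integers k, d with 1 ≤ k ≤ m and d ≥ 1, and 0 ≤ l ≤ k−1. Let z ∈ P(m) satisfy z_1 = z_2 = ... = z_{l+1}, and let t = (t_1,...,t_{n−2l}) be an integer sequence. Define y to be the sequence (z_{l+1}, z_{l+1}, z_{l+2}, z_{l+2}, ..., z_m, z_m) of length 2(m−l), padded with a final zero to length n−2l when n is odd, and let u_i = 2t_i for all i. Then: (z,l) ∈ Z_k^d and t ∈ T_l(z) if and only if (y,u) ∈ YU(2l, k, n, d); and when these equivalent conditions hold, g_{2l,k,n,d}(y,u) = Σ_{i=l+1}^{m} z_i + l(z_1 − 1) + |t| − f_l(z,t). -/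
/-- The set `𝒵_k^d` indexing the subquotients of `S/I_{2k}^d`: pairs `(z,l)` with
`z ∈ P(m)`, `0 ≤ l ≤ k-1`, `z₁ = ⋯ = z_{l+1} ≤ d-1`, and
`|z| + (d-z₁)l + 1 ≤ kd ≤ |z| + (d-z₁)(l+1)`. -/
def Zkd (m k d : ℕ) : Set ((ℕ → ℤ) × ℕ) :=
  { w | IsPart m w.1 ∧ w.2 < k ∧
    (∀ i, 1 ≤ i → i ≤ w.2 + 1 → w.1 i = w.1 1) ∧ w.1 1 ≤ (d : ℤ) - 1 ∧
    psize m w.1 + ((d : ℤ) - w.1 1) * (w.2 : ℤ) + 1 ≤ (k : ℤ) * (d : ℤ) ∧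
    (k : ℤ) * (d : ℤ) ≤ psize m w.1 + ((d : ℤ) - w.1 1) * ((w.2 : ℤ) + 1) }

/-!
Let `S = z_{l+1} + ⋯ + z_m`. Since `z₁ = ⋯ = z_{l+1}`, we have `|z| = l z₁ + S`, and the size
conditions defining `𝒵_k^d` become `S + 1 ≤ d(k - l)` and `d(k - l - 1) ≤ S - z₁`; these two
already force `z₁ ≤ d - 1` and, as `S ≥ 0`, also `l < k`. On the other side `|y| = 2S` and
`y₁ = z_{l+1}`, so the size conditions defining `𝒴𝒰` are the doubles of the same two
inequalities. Finally `y_i = z^{(2)}_{2l+i}`, which matches the conditions on `t` and `u = 2t`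
and turns `g` into the stated formula term by term.
-/

namespace IsPart

variable {k : ℕ} {y : ℕ → ℤ}

lemma nonneg (hy : IsPart k y) (i : ℕ) : 0 ≤ y i := by
  by_cases hi : i = 0 ∨ k < i
  · exact (hy.2.2 i hi).ge
  · exact hy.2.1 i (by omega) (by omega)

lemma antitoneOn_s12 (hy : IsPart k y) : AntitoneOn y (Set.Ici 1) :=
  antitoneOn_nat_Ici_of_succ_le fun i hi ↦ by
    rcases lt_or_ge i k with hik | hki
    · exact hy.1 i hi hik
    · exact (hy.2.2 (i + 1) (Or.inr (by omega))).trans_le (hy.nonneg i)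

lemma const_mul_iff {c : ℤ} (hc : 0 < c) : IsPart k (fun i ↦ c * y i) ↔ IsPart k y := by
  simp only [IsPart, mul_le_mul_iff_right₀ hc, mul_nonneg_iff_of_pos_left hc,
    mul_eq_zero_iff_left hc.ne']

end IsPart

lemma psize_const_mul (k : ℕ) (c : ℤ) (y : ℕ → ℤ) :
    psize k (fun i ↦ c * y i) = c * psize k y :=
  (Finset.mul_sum ..).symm

lemma psize_eq_mul_add_sum_of_const {m l : ℕ} {z : ℕ → ℤ} {c : ℤ} (hl : l ≤ m)
    (hc : ∀ i, 1 ≤ i → i ≤ l → z i = c) :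
    psize m z = l * c + ∑ i ∈ Finset.Icc (l + 1) m, z i := by
  have hhead : ∑ i ∈ Finset.Ioc 0 l, z i = l * c := by
    rw [Finset.sum_congr rfl fun i hi ↦
      hc i (Finset.mem_Ioc.mp hi).1 (Finset.mem_Ioc.mp hi).2]
    simp
  rw [← hhead, Finset.Icc_add_one_left_eq_Ioc, Finset.sum_Ioc_consecutive z l.zero_le hl]
  rfl

/-- The sequence `y = (z_{l+1}, z_{l+1}, z_{l+2}, z_{l+2}, …)` obtained from `z^{(2)}` by deleting
the first `2l` entries, with the convention `y 0 = 0` of `IsPart`. -/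
def tailDouble (l : ℕ) (z : ℕ → ℤ) (i : ℕ) : ℤ := if i = 0 then 0 else z (l + (i + 1) / 2)

section TailDouble

variable {n l : ℕ} {z : ℕ → ℤ}

lemma tailDouble_of_ne_zero {i : ℕ} (hi : i ≠ 0) :
    tailDouble l z i = z (l + (i + 1) / 2) :=
  if_neg hi

lemma tailDouble_one : tailDouble l z 1 = z (l + 1) := rfl

lemma tailDouble_eq_zdub {i : ℕ} (hi : i ≠ 0) : tailDouble l z i = zdub z (2 * l + i) := by
  rw [tailDouble_of_ne_zero hi, zdub]
  congr 1
  omega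

lemma isPart_tailDouble (hz : IsPart (n / 2) z) : IsPart (n - 2 * l) (tailDouble l z) := by
  refine ⟨fun i hi _ ↦ ?_, fun i hi _ ↦ ?_, fun i hi ↦ ?_⟩
  · rw [tailDouble_of_ne_zero (by omega), tailDouble_of_ne_zero (by omega)]
    exact hz.antitoneOn_s12 (Set.mem_Ici.mpr (by omega)) (Set.mem_Ici.mpr (by omega)) (by omega)
  · rw [tailDouble_of_ne_zero (by omega)]
    exact hz.nonneg _
  · rcases eq_or_ne i 0 with rfl | h0
    · rfl
    · rw [tailDouble_of_ne_zero h0]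
      exact hz.2.2 _ (Or.inr (by omega))

lemma isPartE_tailDouble (hz : IsPart (n / 2) z) : IsPartE (n - 2 * l) (tailDouble l z) := by
  refine ⟨isPart_tailDouble hz, fun i hi _ ↦ ?_, fun hodd ↦ ?_⟩
  · rw [tailDouble_of_ne_zero (by omega), tailDouble_of_ne_zero (by omega)]
    congr 1
    omega
  · obtain ⟨c, hc⟩ := hodd
    rw [tailDouble_of_ne_zero (by omega)]
    exact hz.2.2 _ (Or.inr (by omega))

lemma psize_two_mul_tailDouble (l p : ℕ) (z : ℕ → ℤ) :
    psize (2 * p) (tailDouble l z) = 2 * ∑ i ∈ Finset.Icc (l + 1) (l + p), z i := by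
  unfold psize
  induction p with
  | zero => simp
  | succ p ih =>
    have hodd : tailDouble l z (2 * p + 1) = z (l + p + 1) := by
      rw [tailDouble_of_ne_zero (by omega)]
      congr 1
      omega
    have heven : tailDouble l z (2 * p + 1 + 1) = z (l + p + 1) := by
      rw [tailDouble_of_ne_zero (by omega)]
      congr 1
      omega
    rw [mul_add_one, Finset.sum_Icc_succ_top (by omega), Finset.sum_Icc_succ_top (by omega), ih,
      hodd, heven, ← add_assoc, Finset.sum_Icc_succ_top (by omega)]
    ring

lemma psize_tailDouble (hl : l ≤ n / 2) (hz : z (n / 2 + 1) = 0) :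
    psize (n - 2 * l) (tailDouble l z) = 2 * ∑ i ∈ Finset.Icc (l + 1) (n / 2), z i := by
  have hdouble := psize_two_mul_tailDouble l (n / 2 - l) z
  rw [Nat.add_sub_cancel' hl] at hdouble
  rcases Nat.mod_two_eq_zero_or_one n with heven | hodd
  · rwa [show n - 2 * l = 2 * (n / 2 - l) by omega]
  · have hlast : tailDouble l z (2 * (n / 2 - l) + 1) = 0 := by
      rw [tailDouble_of_ne_zero (by omega), ← hz]
      congr 1
      omega
    rw [show n - 2 * l = 2 * (n / 2 - l) + 1 by omega, psize,
      Finset.sum_Icc_succ_top (by omega), hlast, add_zero, ← hdouble, psize]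

end TailDouble

lemma mem_Tset_iff {n l : ℕ} {z t : ℕ → ℤ} :
    t ∈ Tset n l z ↔ IsPart (n - 2 * l) t ∧ t 1 = l ∧ ∀ i, 1 ≤ i → i ≤ n - 2 * l - 1 →
      2 * t i - 2 * t (i + 1) ≤ zdub z (2 * l + i) - zdub z (2 * l + i + 1) := by
  simp only [Tset, IsPart, Set.mem_ofPred_eq]
  tauto

lemma mem_Zkd_iff_of_const {m k d l : ℕ} {z : ℕ → ℤ} (hl : l ≤ m) (hz : IsPart m z)
    (hzc : ∀ i, 1 ≤ i → i ≤ l + 1 → z i = z 1) :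
    (z, l) ∈ Zkd m k d ↔
      (∑ i ∈ Finset.Icc (l + 1) m, z i) + 1 ≤ (d : ℤ) * (k - l) ∧
      (d : ℤ) * (k - l - 1) ≤ (∑ i ∈ Finset.Icc (l + 1) m, z i) - z 1 := by
  have hsize := psize_eq_mul_add_sum_of_const hl fun i hi hil ↦ hzc i hi (by omega)
  have hsum : 0 ≤ ∑ i ∈ Finset.Icc (l + 1) m, z i := Finset.sum_nonneg fun i _ ↦ hz.nonneg i
  simp only [Zkd, Set.mem_ofPred_eq, hsize]
  constructor
  · rintro ⟨-, -, -, -, hupper, hlower⟩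
    constructor <;> linarith
  · rintro ⟨hupper, hlower⟩
    have hlk : (0 : ℤ) < k - l :=
      pos_of_mul_pos_right (by linarith : 0 < (d : ℤ) * (k - l)) (by positivity)
    refine ⟨hz, by omega, hzc, ?_, ?_, ?_⟩ <;> linarith

section Correspondence

variable {n l : ℕ} {z : ℕ → ℤ}

lemma tailDouble_mem_YU_iff (hl : l ≤ n / 2) (hz : IsPart (n / 2) z) (k d : ℕ)
    (t : ℕ → ℤ) :
    (tailDouble l z, fun i ↦ 2 * t i) ∈ YU (2 * l) k n d ↔
      ((∑ i ∈ Finset.Icc (l + 1) (n / 2), z i) + 1 ≤ (d : ℤ) * (k - l) ∧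
        (d : ℤ) * (k - l - 1) ≤ (∑ i ∈ Finset.Icc (l + 1) (n / 2), z i) - z (l + 1)) ∧
      t ∈ Tset n l z := by
  have hsize := psize_tailDouble hl (hz.2.2 _ (Or.inr (Nat.lt_succ_self _)))
  have hgap : ∀ i, 1 ≤ i → tailDouble l z i - tailDouble l z (i + 1) =
      zdub z (2 * l + i) - zdub z (2 * l + i + 1) := fun i hi ↦ by
    rw [tailDouble_eq_zdub (by omega), tailDouble_eq_zdub (by omega), add_assoc]
  rw [mem_Tset_iff]
  simp only [YU, Set.mem_ofPred_eq, hsize, tailDouble_one, IsPart.const_mul_iff two_pos,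
    even_two_mul, Nat.cast_mul, Nat.cast_ofNat]
  constructor
  · rintro ⟨-, ht, hupper, hlower, -, ht₁, hstep⟩
    exact ⟨⟨by linarith, by linarith⟩, ht, by linarith, fun i hi hin ↦
      (hstep i hi hin).trans_eq (hgap i hi)⟩
  · rintro ⟨⟨hupper, hlower⟩, ht, ht₁, hstep⟩
    exact ⟨isPartE_tailDouble hz, ht, by linarith, by linarith, fun _ ↦ trivial, by rw [ht₁],
      fun i hi hin ↦ (hstep i hi hin).trans_eq (hgap i hi).symm⟩

lemma gfun_tailDouble (hl : l ≤ n / 2) (hz : z (n / 2 + 1) = 0) (t : ℕ → ℤ) :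
    gfun (2 * l) n (tailDouble l z, fun i ↦ 2 * t i) =
      (((∑ i ∈ Finset.Icc (l + 1) (n / 2), z i) + (l : ℤ) * (z (l + 1) - 1)
        + tsize n l t - ffun n l z t : ℤ) : ℚ) := by
  have hcorrection : ∑ i ∈ Finset.Icc 1 (n - 2 * l - 1),
      (((2 * t (i + 1) : ℤ) : ℚ) / 2) *
        (((tailDouble l z i : ℚ) - tailDouble l z (i + 1)) -
          (((2 * t i : ℤ) : ℚ) - ((2 * t (i + 1) : ℤ) : ℚ))) = ffun n l z t := by
    rw [ffun, Int.cast_sum]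
    refine Finset.sum_congr rfl fun i hi ↦ ?_
    have hi₁ : 1 ≤ i := (Finset.mem_Icc.mp hi).1
    rw [tailDouble_eq_zdub (by omega), tailDouble_eq_zdub (by omega), ← add_assoc]
    push_cast
    ring
  have htsize : psize (n - 2 * l) (fun i ↦ 2 * t i) = 2 * tsize n l t :=
    psize_const_mul _ 2 t
  simp only [gfun, hcorrection, htsize, psize_tailDouble hl hz, tailDouble_one]
  push_cast
  ring

end Correspondence

theorem Zkd_YU_equiv_general {n l : ℕ} {z : ℕ → ℤ} (k d : ℕ) (t : ℕ → ℤ) (hl : l ≤ n / 2)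
    (hz : IsPart (n / 2) z) (hzc : ∀ i, 1 ≤ i → i ≤ l + 1 → z i = z 1) :
    (((z, l) ∈ Zkd (n / 2) k d ∧ t ∈ Tset n l z) ↔
      (tailDouble l z, fun i ↦ 2 * t i) ∈ YU (2 * l) k n d) ∧
    gfun (2 * l) n (tailDouble l z, fun i ↦ 2 * t i) =
      (((∑ i ∈ Finset.Icc (l + 1) (n / 2), z i) + (l : ℤ) * (z 1 - 1)
        + tsize n l t - ffun n l z t : ℤ) : ℚ) := by
  have hfirst : z (l + 1) = z 1 := hzc (l + 1) (by omega) le_rfl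
  have hlast : z (n / 2 + 1) = 0 := hz.2.2 _ (Or.inr (Nat.lt_succ_self _))
  rw [mem_Zkd_iff_of_const hl hz hzc, tailDouble_mem_YU_iff hl hz, gfun_tailDouble hl hlast, hfirst]
  exact ⟨Iff.rfl, rfl⟩

/-- Lemma 5.9: the correspondence `(z,t) ↦ (y,u)`, where
`y = (z_{l+1}, z_{l+1}, z_{l+2}, z_{l+2}, …)` (of length `n - 2l`, padded by a final
zero when `n` is odd) and `u = 2t`, satisfies:
`(z,l) ∈ 𝒵_k^d` and `t ∈ 𝒯_l(z)` if and only if `(y,u) ∈ 𝒴𝒰(2l,k,n,d)`; and in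
that case `g_{2l,k,n,d}(y,u) = Σ_{i=l+1}^m z_i + l(z₁-1) + |t| - f_l(z,t)`. -/
theorem Zkd_YU_equiv (n m k d l : ℕ) (z t : ℕ → ℤ) (h2 : 2 ≤ n) (hm : m = n / 2)
    (hk1 : 1 ≤ k) (hkm : k ≤ m) (hd : 1 ≤ d) (hl : l < k)
    (hz : IsPart m z) (hzc : ∀ i, 1 ≤ i → i ≤ l + 1 → z i = z 1) :
    (((z, l) ∈ Zkd m k d ∧ t ∈ Tset n l z) ↔
      ((fun i => if i = 0 then 0 else z (l + (i + 1) / 2)), (fun i => 2 * t i)) ∈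
        YU (2 * l) k n d) ∧
    (((z, l) ∈ Zkd m k d ∧ t ∈ Tset n l z) →
      gfun (2 * l) n
          ((fun i => if i = 0 then 0 else z (l + (i + 1) / 2)), (fun i => 2 * t i)) =
        (((∑ i ∈ Finset.Icc (l + 1) m, z i) + (l : ℤ) * (z 1 - 1)
            + tsize n l t - ffun n l z t : ℤ) : ℚ)) := by
  subst hm
  have h := Zkd_YU_equiv_general k d t (hl.le.trans hkm) hz hzc
  exact ⟨h.1, fun _ ↦ h.2⟩
end

section
/- Let n ≥ 2, m = ⌊n/2⌋, 0 ≤ l ≤ m−1, z ∈ P(m) with z_1 = ... = z_{l+1}, t ∈ T_l(z), and λ ∈ W(z,l,t). If |λ| < n(n−1), then l ≥ 1, t_i ≥ 1 for all 1 ≤ i ≤ n−2l, and C(2l,2) + 2·Σ_{i=1}^{n−2l} t_i ≥ 2n − 3, where C(a,2) = a(a−1)/2. (This is the combinatorial core of the Kodaira-type vanishing H^q(Y, O_Y(−j)) = 0 for q < 2n−4 and j > 0 for GL-equivariant Pfaffian thickenings Y.) -/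
/-!
If the last entry `t_{n-2l}` were zero, the defining equation of `W(z,l,t)` at `i = n-2l` would read
`λ_n = z^{(2)}_n + n - 1 ≥ n - 1`, and since `λ_n` is the smallest entry of `λ` this would force
`|λ| ≥ n(n-1)`. Hence `t_{n-2l} ≥ 1`, so by monotonicity every `t_i` is at least `1`, in particular
`l = t₁`. Summing, `|t| ≥ l + (n-2l-1)`, and the last bound follows from the identity
`C(2l,2) + 2(l + (n-2l-1)) = (2n-3) + (2l-1)(l-1)`, whose last product is nonnegative.
-/

theorem antitoneOn_Icc_of_add_one_le {α : Type*} [Preorder α] {f : ℕ → α} {a b : ℕ}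
    (hf : ∀ i, a ≤ i → i < b → f (i + 1) ≤ f i) : AntitoneOn f (Set.Icc a b) :=
  antitoneOn_of_add_one_le Set.ordConnected_Icc fun i _ hi hi' ↦ hf i hi.1 hi'.2

theorem card_nsmul_apply_le_sum_Icc_of_antitoneOn {ι M : Type*} [Preorder ι]
    [LocallyFiniteOrder ι] [AddCommMonoid M] [Preorder M] [AddLeftMono M] {f : ι → M} {a b : ι}
    (hf : AntitoneOn f (Set.Icc a b)) : (Finset.Icc a b).card • f b ≤ ∑ i ∈ Finset.Icc a b, f i :=
  Finset.card_nsmul_le_sum _ _ _ fun i hi ↦ by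
    obtain ⟨hai, hib⟩ := Finset.mem_Icc.mp hi
    exact hf ⟨hai, hib⟩ ⟨hai.trans hib, le_rfl⟩ hib

theorem apply_add_card_nsmul_le_sum_Icc {ι M : Type*} [PartialOrder ι] [LocallyFiniteOrder ι]
    [AddCommMonoid M] [Preorder M] [AddLeftMono M] {f : ι → M} {c : M} {a b : ι} (hab : a ≤ b)
    (hf : ∀ i ∈ Finset.Ioc a b, c ≤ f i) :
    f a + (Finset.Ioc a b).card • c ≤ ∑ i ∈ Finset.Icc a b, f i := by
  rw [← Finset.add_sum_Ioc_eq_sum_Icc hab]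
  gcongr
  exact Finset.card_nsmul_le_sum _ _ _ hf

theorem cast_two_mul_choose_two (l : ℕ) : ((2 * l).choose 2 : ℤ) = l * (2 * l - 1) := by
  rw [Nat.choose_two_right, mul_assoc, Nat.mul_div_cancel_left _ two_pos]
  cases l with
  | zero => simp
  | succ k => push_cast [show 2 * (k + 1) - 1 = 2 * k + 1 by lia]; ring

theorem two_mul_sub_three_le_choose_two_add (N : ℤ) (l : ℕ) :
    2 * N - 3 ≤ ((2 * l).choose 2 : ℤ) + 2 * (l + (N - 2 * l - 1)) := by
  have hprod : 0 ≤ (2 * (l : ℤ) - 1) * (l - 1) := by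
    cases l with
    | zero => norm_num
    | succ k => push_cast; ring_nf; positivity
  calc 2 * N - 3 ≤ 2 * N - 3 + (2 * l - 1) * (l - 1) := by linarith
    _ = ((2 * l).choose 2 : ℤ) + 2 * (l + (N - 2 * l - 1)) := by
      rw [cast_two_mul_choose_two]; ring

theorem IsPart.nonneg_s15 {k : ℕ} {y : ℕ → ℤ} (hy : IsPart k y) (i : ℕ) : 0 ≤ y i := by
  obtain ⟨-, hnonneg, hzero⟩ := hy
  by_cases hi : 1 ≤ i ∧ i ≤ k
  · exact hnonneg i hi.1 hi.2
  · exact (hzero i (by lia)).ge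

section

variable {n l : ℕ} {z t lam : ℕ → ℤ}

theorem Tset.last_le (ht : t ∈ Tset n l z) {i : ℕ} (hi : 1 ≤ i) (hin : i ≤ n - 2 * l) :
    t (n - 2 * l) ≤ t i :=
  antitoneOn_Icc_of_add_one_le ht.2.1 ⟨hi, hin⟩ ⟨hi.trans hin, le_rfl⟩ hin

theorem Tset.le_tsize (hl : 2 * l < n) (ht : t ∈ Tset n l z)
    (hpos : ∀ i, 1 ≤ i → i ≤ n - 2 * l → 1 ≤ t i) : l + ((n : ℤ) - 2 * l - 1) ≤ tsize n l t := by
  have hsum : t 1 + (Finset.Ioc 1 (n - 2 * l)).card • 1 ≤ tsize n l t :=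
    apply_add_card_nsmul_le_sum_Icc (by lia) fun i hi ↦ by
      obtain ⟨h1i, hin⟩ := Finset.mem_Ioc.mp hi
      exact hpos i h1i.le hin
  rw [ht.1, Nat.card_Ioc, nsmul_one] at hsum
  lia

theorem Wset.last_eq (hl : 2 * l < n) (hlam : lam ∈ Wset n l z t) (ht : t (n - 2 * l) = 0) :
    lam n = zdub z n + n - 1 := by
  have hlast := hlam.2.1 (n - 2 * l) (by lia) le_rfl
  rwa [ht, Int.toNat_zero, mul_zero, mul_zero, Nat.sub_zero, sub_zero,
    Nat.add_sub_cancel' hl.le] at hlast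

theorem Wset.mul_last_le_sum (hlam : lam ∈ Wset n l z t) :
    n * lam n ≤ ∑ i ∈ Finset.Icc 1 n, lam i := by
  simpa using card_nsmul_apply_le_sum_Icc_of_antitoneOn (antitoneOn_Icc_of_add_one_le hlam.1)

theorem Wset.one_le_last_of_sum_lt (hl : 2 * l < n) (hz : 0 ≤ zdub z n) (ht : t ∈ Tset n l z)
    (hlam : lam ∈ Wset n l z t) (hsize : ∑ i ∈ Finset.Icc 1 n, lam i < (n : ℤ) * ((n : ℤ) - 1)) :
    1 ≤ t (n - 2 * l) := by
  by_contra! hlt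
  have hzero : t (n - 2 * l) = 0 := by
    have hnonneg := ht.2.2.1 (n - 2 * l) (by lia) le_rfl
    lia
  refine hsize.not_ge ?_
  calc (n : ℤ) * (n - 1) ≤ n * lam n := by
        rw [Wset.last_eq hl hlam hzero]
        gcongr
        lia
    _ ≤ ∑ i ∈ Finset.Icc 1 n, lam i := Wset.mul_last_le_sum hlam

theorem kodaira_core_general (hl : 2 * l < n) (hz : 0 ≤ zdub z n) (ht : t ∈ Tset n l z)
    (hlam : lam ∈ Wset n l z t)
    (hsize : ∑ i ∈ Finset.Icc 1 n, lam i < (n : ℤ) * ((n : ℤ) - 1)) :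
    1 ≤ l ∧ (∀ i, 1 ≤ i → i ≤ n - 2 * l → 1 ≤ t i) ∧
      2 * (n : ℤ) - 3 ≤ ((2 * l).choose 2 : ℤ) + 2 * tsize n l t := by
  have hpos : ∀ i, 1 ≤ i → i ≤ n - 2 * l → 1 ≤ t i := fun i hi hin ↦
    (Wset.one_le_last_of_sum_lt hl hz ht hlam hsize).trans (Tset.last_le ht hi hin)
  refine ⟨?_, hpos, ?_⟩
  · have hfirst := hpos 1 le_rfl (by lia)
    rw [ht.1] at hfirst
    exact_mod_cast hfirst
  · have htsize := Tset.le_tsize hl ht hpos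
    linarith [two_mul_sub_three_le_choose_two_add n l]

end

/-- The combinatorial core of Theorem E (Kodaira vanishing for Pfaffian thickenings):
if `λ ∈ W(z,l,t)` has `|λ| < n(n-1)`, then `l ≥ 1`, all `t_i ≥ 1`, and
`C(2l,2) + 2Σ_{i=1}^{n-2l} t_i ≥ 2n - 3`. -/
theorem kodaira_core (n m l : ℕ) (z t lam : ℕ → ℤ) (h2 : 2 ≤ n) (hm : m = n / 2)
    (hl : l ≤ m - 1) (hz : IsPart m z) (hzc : ∀ i, 1 ≤ i → i ≤ l + 1 → z i = z 1)
    (ht : t ∈ Tset n l z) (hlam : lam ∈ Wset n l z t)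
    (hsize : ∑ i ∈ Finset.Icc 1 n, lam i < (n : ℤ) * ((n : ℤ) - 1)) :
    1 ≤ l ∧ (∀ i, 1 ≤ i → i ≤ n - 2 * l → 1 ≤ t i) ∧
      2 * (n : ℤ) - 3 ≤ ((2 * l).choose 2 : ℤ) + 2 * tsize n l t :=
  kodaira_core_general (by lia) (hz.nonneg_s15 _) ht hlam hsize
end
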